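/- arXiv:2405.10302 — 3 statements merged into one kernel-verified Lean document; each statement's English description precedes it below -/
import Mathlib

section
/- There is a universal constant C > 0 with the following property. Let f̂ : 𝒳 → (0,∞) be a fixed measurable function, let (X₁,Y₁),…,(X_m,Y_m) be i.i.d. with law P_S, let ŵ : 𝒳 → [0,∞) be a fixed measurable function with sup ŵ ≤ W′, let α ∈ (0,1), and define λ̂(α) = inf{λ ≥ 0 : (1/m)Σᵢ ŵ(Xᵢ)·1{Yᵢ² > λ f̂(Xᵢ)} ≤ α}. Assume that almost surely the ratios Yᵢ²/f̂(Xᵢ), i = 1,…,m, are positive and pairwise distinct. Then for every t > 0, with probability at least 1 − 2e^{−t}: |P_T(Y² > λ̂(α)·f̂(X)) − α| ≤ W′/m + E_S[|ŵ(X) − w₀(X)|] + (2W + W′)√(t/(2m)) + C·W/√m, where the target probability P_T(Y² > λ̂(α)·f̂(X)) is evaluated at the realized (sample-dependent) value of λ̂(α), with (X,Y) ~ P_T independent of the sample. -/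
open MeasureTheory

universe u

/-!
Put `Z = Y² / f̂(X)`, so that `λ · f̂(X) < Y²` means `λ < Z`, and let `G(λ) = P_T(Z > λ)`, which is
the source expectation of `w₀(X) · 1{Z > λ}`. Write `F(λ)` for the empirical mean of
`ŵ(X) · 1{Z > λ}`. Since the ratios are distinct, each jump of the right-continuous step function
`F` is at most `W' / m`, so its quantile `λ̂` satisfies `F(λ̂) ≤ α`, and `α ≤ F(λ̂) + W' / m` unless
`λ̂ = 0` (`quantile_spec`); in the latter case `G(λ̂) = 1 ≥ α`. It remains to bound
`|F - G|` uniformly, and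
`|F(λ) - G(λ)| ≤ (mean of |ŵ - w₀|) + sup_λ |(mean of w₀ · 1{Z > λ}) - G(λ)|`.

Both terms on the right have bounded differences in the sample, with constants `max W W' / m` and
`W / m`, so McDiarmid's inequality (`mcdiarmid`) bounds each by its mean plus `max W W'`, resp. `W`,
times `√(t / (2m))`, outside an event of probability `e^{-t}`.

The mean of the supremum is at most `4 W / √m` (`integral_supDev_le`). Symmetrization with an
independent copy of the sample replaces the deviations by `∑ ± w₀ · 1{Z > λ}` with independent
random signs. When the sample points are ordered by decreasing `Z`, these are partial sums of a
martingale, so Doob's `L²` maximal inequality (`maximal_signs`) bounds their maximum with no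
logarithmic loss.
-/

/-! ### Doob's maximal inequality for random signs -/

/-- The sign vector encoded by a finite set `T`: `+1` on `T` and `-1` off `T`. Summing over all
subsets `T` is averaging over independent random signs, up to normalization. -/
noncomputable def sgn {ι : Type*} [DecidableEq ι] (T : Finset ι) (i : ι) : ℝ := if i ∈ T then 1 else -1

/-- One step of Burkholder's method for Doob's `L²` inequality. With `x` the current position of the
walk and `M` the running maximum of its modulus, the potential `4 x² - 4 M |x| + 2 M²`, which
dominates `M²`, grows on average by at most `4 a²` under a step `± a`. -/
lemma doob_step (M x a : ℝ) :
    (4 * (x + a) ^ 2 - 4 * max M |x + a| * |x + a| + 2 * max M |x + a| ^ 2) +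
      (4 * (x - a) ^ 2 - 4 * max M |x - a| * |x - a| + 2 * max M |x - a| ^ 2) ≤
    2 * (4 * x ^ 2 - 4 * M * |x| + 2 * M ^ 2) + 8 * a ^ 2 ∨ M < 0 := by
  by_cases hM : M < 0
  · exact Or.inr hM
  left
  push Not at hM
  have key : ∀ p : ℝ, 2 * max M p ^ 2 - 4 * max M p * p ≤ 2 * M ^ 2 - 4 * M * p := by
    intro p
    rcases le_total p M with h | h
    · rw [max_eq_left h]
    · rw [max_eq_right h]; nlinarith [sq_nonneg (M - p)]
  have h1 := key |x + a|
  have h2 := key |x - a|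
  have h3 : 2 * |x| ≤ |x + a| + |x - a| := by
    have := abs_add_le (x + a) (x - a)
    rw [show x + a + (x - a) = 2 * x by ring, abs_mul, abs_two] at this
    exact this
  nlinarith [mul_le_mul_of_nonneg_left h3 hM]

/-- Doob's `L²` maximal inequality for the thresholded signed sums, in Burkholder form: the walk
starts at `x` with running maximum `M`, and the points are visited in order of decreasing `z`, so
that `{i | q < z i}` is always an initial segment. The function `R` is a majorant, over all
thresholds `q`, for each choice of signs. -/
lemma maximal_signs {ι : Type*} [DecidableEq ι] (a z : ι → ℝ) (s : Finset ι) :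
    ∀ M x : ℝ, |x| ≤ M → ∃ R : Finset ι → ℝ, (∀ T, M ≤ R T) ∧
      (∀ T, ∀ q : ℝ, |x + ∑ i ∈ s, sgn T i * (a i * if q < z i then 1 else 0)| ≤ R T) ∧
      ∑ T ∈ s.powerset, R T ^ 2 ≤
        2 ^ s.card * (4 * x ^ 2 - 4 * M * |x| + 2 * M ^ 2 + 4 * ∑ i ∈ s, a i ^ 2) := by
  induction s using Finset.induction_on_max_value z with
  | empty =>
    intro M x h
    refine ⟨fun _ => M, fun _ => le_rfl, fun _ _ => by simpa using h, ?_⟩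
    simp
    nlinarith [sq_nonneg (2 * |x| - M), sq_abs x]
  | insert b s hb hmax ih =>
    intro M x h
    have hM : ¬ M < 0 := not_lt.mpr ((abs_nonneg x).trans h)
    obtain ⟨R₁, hR₁M, hR₁, hR₁s⟩ := ih (max M |x + a b|) (x + a b) (le_max_right _ _)
    obtain ⟨R₂, hR₂M, hR₂, hR₂s⟩ := ih (max M |x - a b|) (x - a b) (le_max_right _ _)
    have hcase : ∀ q : ℝ, q < z b ∨ ∀ i ∈ insert b s, ¬ q < z i := by
      intro q
      by_cases hq : q < z b
      · exact Or.inl hq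
      · right
        intro i hi
        rcases Finset.mem_insert.mp hi with rfl | hi
        · exact hq
        · exact fun h' => hq (h'.trans_le (hmax i hi))
    -- The maximizer `b` of `z` is the first step of the walk; its sign decides which of the two
    -- continuations applies.
    refine ⟨fun T => if b ∈ T then R₁ (T.erase b) else R₂ T, ?_, ?_, ?_⟩
    · intro T
      dsimp only
      split_ifs
      · exact (le_max_left _ _).trans (hR₁M _)
      · exact (le_max_left _ _).trans (hR₂M _)
    · intro T q
      dsimp only
      rcases hcase q with hq | hq
      · rw [Finset.sum_insert hb, if_pos hq, ← add_assoc]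
        by_cases hT : b ∈ T
        · have := hR₁ (T.erase b) q
          rw [if_pos hT]
          convert this using 3
          · simp [sgn, hT]
          · refine Finset.sum_congr rfl fun i hi => ?_
            have : i ≠ b := fun h => hb (h ▸ hi)
            simp [sgn, this]
        · have := hR₂ T q
          rw [if_neg hT]
          convert this using 3
          simp [sgn, hT, sub_eq_add_neg]
      · rw [Finset.sum_eq_zero fun i hi => by rw [if_neg (hq i hi)]; simp, add_zero]
        split_ifs
        · exact h.trans ((le_max_left _ _).trans (hR₁M _))
        · exact h.trans ((le_max_left _ _).trans (hR₂M _))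
    · rw [Finset.sum_powerset_insert hb, Finset.sum_insert hb, Finset.card_insert_of_notMem hb]
      have e1 : ∑ T ∈ s.powerset, (if b ∈ T then R₁ (T.erase b) else R₂ T) ^ 2
          = ∑ T ∈ s.powerset, R₂ T ^ 2 := by
        refine Finset.sum_congr rfl fun T hT => ?_
        rw [if_neg fun h => hb (Finset.mem_powerset.mp hT h)]
      have e2 : ∑ T ∈ s.powerset, (if b ∈ insert b T then R₁ ((insert b T).erase b)
          else R₂ (insert b T)) ^ 2 = ∑ T ∈ s.powerset, R₁ T ^ 2 := by
        refine Finset.sum_congr rfl fun T hT => ?_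
        rw [if_pos (Finset.mem_insert_self _ _),
          Finset.erase_insert fun h => hb (Finset.mem_powerset.mp hT h)]
      rw [e1, e2]
      have h1 := (doob_step M x (a b)).resolve_right hM
      have h2 := mul_le_mul_of_nonneg_left h1 (by positivity : (0 : ℝ) ≤ 2 ^ s.card)
      rw [pow_succ]
      linarith

lemma mean_max_signs {m : ℕ} (W : ℝ) (a z : Fin m → ℝ) (ha : ∀ i, a i ∈ Set.Icc 0 W) :
    ∃ R : Finset (Fin m) → ℝ,
      (∀ T, ∀ q : ℝ, |∑ i, sgn T i * (a i * if q < z i then 1 else 0)| ≤ R T) ∧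
      ∑ T, R T ≤ 2 ^ m * (2 * W * Real.sqrt m) := by
  obtain ⟨R, h0, hR, hs⟩ := maximal_signs a z Finset.univ 0 0 (by simp)
  refine ⟨R, fun T q => by simpa using hR T q, ?_⟩
  rcases Nat.eq_zero_or_pos m with rfl | hm
  · simp at hs ⊢
    rw [Subsingleton.elim default ∅, hs]
  have hW : 0 ≤ W := (ha ⟨0, hm⟩).1.trans (ha ⟨0, hm⟩).2
  have h1 : ∑ i, a i ^ 2 ≤ m * W ^ 2 := by
    calc ∑ i, a i ^ 2 ≤ ∑ i : Fin m, W ^ 2 :=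
          Finset.sum_le_sum fun i _ => pow_le_pow_left₀ (ha i).1 (ha i).2 2
      _ = m * W ^ 2 := by simp
  have h2 : (∑ T, R T) ^ 2 ≤ 2 ^ m * ∑ T, R T ^ 2 := by
    have := sq_sum_le_card_mul_sum_sq (s := (Finset.univ : Finset (Finset (Fin m)))) (f := R)
    simpa using this
  simp at hs
  refine (le_abs_self _).trans (abs_le_of_sq_le_sq (h2.trans ?_) (by positivity))
  rw [mul_pow, mul_pow, Real.sq_sqrt (by positivity)]
  calc (2 : ℝ) ^ m * ∑ T, R T ^ 2 ≤ 2 ^ m * (2 ^ m * (4 * (m * W ^ 2))) := by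
        gcongr; exact hs.trans (by gcongr)
    _ = _ := by ring

/-! ### The empirical quantile -/

/-- The empirical tail at its own quantile `L` is at most `α`, and it is within one jump of `α`
unless `L = 0`. -/
lemma quantile_spec {m : ℕ} (hm : 0 < m) (z v : Fin m → ℝ) (W' α : ℝ) (hv : ∀ i, 0 ≤ v i)
    (hvW : ∀ i, v i ≤ W') (hz : Function.Injective z) (hα : 0 < α) (L : ℝ)
    (hL : L = sInf {l : ℝ | 0 ≤ l ∧
      (1 / m : ℝ) * ∑ i, v i * (if l < z i then (1 : ℝ) else 0) ≤ α}) :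
    (1 / m : ℝ) * ∑ i, v i * (if L < z i then (1 : ℝ) else 0) ≤ α ∧
      (L = 0 ∨ α ≤ (1 / m : ℝ) * ∑ i, v i * (if L < z i then (1 : ℝ) else 0) + W' / m) := by
  set S := {l : ℝ | 0 ≤ l ∧ (1 / m : ℝ) * ∑ i, v i * (if l < z i then (1 : ℝ) else 0) ≤ α} with hS
  have hbdd : BddBelow S := ⟨0, fun l hl => hl.1⟩
  have hne : S.Nonempty := by
    refine ⟨∑ i, |z i|, Finset.sum_nonneg fun i _ => abs_nonneg _, ?_⟩
    rw [Finset.sum_eq_zero, mul_zero]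
    · exact hα.le
    · intro i _
      rw [if_neg, mul_zero]
      exact not_lt.mpr ((le_abs_self _).trans
        (Finset.single_le_sum (f := fun i => |z i|) (fun i _ => abs_nonneg _) (Finset.mem_univ i)))
  have hL0 : 0 ≤ L := hL ▸ le_csInf hne fun l hl => hl.1
  constructor
  -- The empirical tail is constant on `[L, L + δ)`, and this interval meets `S`.
  · have hev : ∀ᶠ l in nhds L, ∀ i, L < z i → l < z i :=
      Filter.eventually_all.mpr fun i => by
        by_cases h : L < z i
        · filter_upwards [eventually_lt_nhds h] with l hl _ using hl
        · exact Filter.Eventually.of_forall fun l h' => absurd h' h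
    obtain ⟨δ, hδ, hball⟩ := Metric.eventually_nhds_iff.mp hev
    obtain ⟨l, hlS, hlt⟩ := exists_lt_of_csInf_lt hne (hL ▸ lt_add_of_pos_right L hδ)
    have hLl : L ≤ l := hL ▸ csInf_le hbdd hlS
    have hz' := hball (y := l) (by rw [Real.dist_eq, abs_of_nonneg (by linarith)]; linarith)
    refine le_trans ?_ hlS.2
    gcongr with i
    · exact hv i
    · by_cases h : L < z i
      · rw [if_pos h, if_pos (hz' i h)]
      · rw [if_neg h]; split_ifs <;> norm_num
  · rcases hL0.eq_or_lt with h | hpos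
    · exact Or.inl h.symm
    right
    have hev : ∀ᶠ l in nhdsWithin L (Set.Iio L), ∀ i, z i < L → z i ≤ l :=
      Filter.eventually_all.mpr fun i => by
        by_cases h : z i < L
        · filter_upwards [nhdsWithin_le_nhds (eventually_gt_nhds h)] with l hl _ using hl.le
        · exact Filter.Eventually.of_forall fun l h' => absurd h' h
    -- Just below `L` the tail exceeds `α`; by distinctness, moving to `L` drops at most one term.
    obtain ⟨l, ⟨hl1, hl2⟩, hl3⟩ := ((hev.and (nhdsWithin_le_nhds (eventually_gt_nhds hpos))).and
      self_mem_nhdsWithin).exists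
    have hlS : l ∉ S := fun h => absurd (csInf_le hbdd h) (not_le.mpr (hL ▸ hl3))
    have hα' : α < (1 / m : ℝ) * ∑ i, v i * (if l < z i then (1 : ℝ) else 0) := by
      by_contra hcon
      exact hlS ⟨hl2.le, not_lt.mp hcon⟩
    have hone : ∑ i, v i * (if z i = L then (1 : ℝ) else 0) ≤ W' := by
      by_cases hex : ∃ j, z j = L
      · obtain ⟨j, hj⟩ := hex
        rw [Finset.sum_eq_single j]
        · simpa [hj] using hvW j
        · intro i _ hij
          rw [if_neg fun h => hij (hz (h.trans hj.symm)), mul_zero]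
        · simp
      · push Not at hex
        simp [hex]
        exact (hv ⟨0, hm⟩).trans (hvW _)
    have hsum : ∑ i, v i * (if l < z i then (1 : ℝ) else 0) ≤
        ∑ i, v i * (if L < z i then (1 : ℝ) else 0) + W' := by
      refine le_trans ?_ (add_le_add le_rfl hone)
      rw [← Finset.sum_add_distrib]
      refine Finset.sum_le_sum fun i _ => ?_
      rw [← mul_add]
      refine mul_le_mul_of_nonneg_left ?_ (hv i)
      rcases lt_trichotomy (z i) L with h | h | h
      · rw [if_neg (not_lt.mpr (hl1 i h))]; split_ifs <;> norm_num
      · simp [h]; split_ifs <;> norm_num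
      · rw [if_pos h, if_neg h.ne']; split_ifs <;> norm_num
    refine hα'.le.trans ?_
    calc _ ≤ (1 / m : ℝ) * (∑ i, v i * (if L < z i then (1 : ℝ) else 0) + W') := by gcongr
      _ = _ := by ring
/-! ### McDiarmid's inequality -/

lemma integrable_bdd {Ω : Type*} [MeasurableSpace Ω] {μ : Measure Ω} [IsFiniteMeasure μ]
    {f : Ω → ℝ} (hf : Measurable f) {B : ℝ} (hB : ∀ x, |f x| ≤ B) : Integrable f μ :=
  Integrable.of_bound hf.aestronglyMeasurable B (Filter.Eventually.of_forall hB)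

lemma integrable_exp_bdd {Ω : Type*} [MeasurableSpace Ω] {μ : Measure Ω} [IsFiniteMeasure μ]
    {f : Ω → ℝ} (hf : Measurable f) {B : ℝ} (hB : ∀ x, |f x| ≤ B) (r : ℝ) :
    Integrable (fun x => Real.exp (r * f x)) μ := by
  refine integrable_bdd (B := Real.exp (|r| * B)) (by fun_prop) fun x => ?_
  rw [abs_of_pos (Real.exp_pos _), Real.exp_le_exp]
  calc r * f x ≤ |r * f x| := le_abs_self _
    _ = |r| * |f x| := abs_mul _ _
    _ ≤ _ := by gcongr; exact hB x

lemma abs_integral_le_bdd {Ω : Type*} [MeasurableSpace Ω] {μ : Measure Ω} [IsProbabilityMeasure μ]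
    {f : Ω → ℝ} {B : ℝ} (hB : ∀ x, |f x| ≤ B) : |∫ x, f x ∂μ| ≤ B := by
  have := norm_integral_le_of_norm_le_const (μ := μ) (f := f) (Filter.Eventually.of_forall hB)
  simpa using this

/-- Hoeffding's lemma for a function of oscillation at most `c`. -/
lemma hoeffding_osc {Ω : Type*} [MeasurableSpace Ω] (μ : Measure Ω) [IsProbabilityMeasure μ]
    {g : Ω → ℝ} (hg : Measurable g) {B c : ℝ} (hB : ∀ x, |g x| ≤ B)
    (hc : ∀ x y, |g x - g y| ≤ c) (r : ℝ) :
    ∫ x, Real.exp (r * g x) ∂μ ≤ Real.exp (r * (∫ x, g x ∂μ) + (c / 2) ^ 2 * r ^ 2 / 2) := by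
  have : Nonempty Ω := nonempty_of_isProbabilityMeasure μ
  have hbdd : BddBelow (Set.range g) := ⟨-B, by rintro _ ⟨x, rfl⟩; exact (abs_le.mp (hB x)).1⟩
  have hmem : ∀ x, g x ∈ Set.Icc (⨅ x, g x) ((⨅ x, g x) + c) := fun x =>
    ⟨ciInf_le hbdd x, by
      have : g x - c ≤ ⨅ y, g y := le_ciInf fun y => by linarith [(abs_le.mp (hc x y)).2]
      linarith⟩
  have h := (ProbabilityTheory.hasSubgaussianMGF_of_mem_Icc (μ := μ) hg.aemeasurable
    (Filter.Eventually.of_forall hmem)).mgf_le r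
  simp only [ProbabilityTheory.mgf, mul_sub, add_sub_cancel_left] at h
  simp only [Real.exp_sub, integral_div] at h
  rw [div_le_iff₀ (Real.exp_pos _), ← Real.exp_add] at h
  refine h.trans (le_of_eq ?_)
  congr 1
  simp
  rw [div_pow, sq_abs]
  ring

/-- McDiarmid's bound on the moment generating function of a function with bounded differences `c`,
by induction on the number of coordinates: integrate out all coordinates but the first, then apply
Hoeffding's lemma to the resulting function of the first one. -/
lemma mcdiarmid_mgf {Ω : Type*} [MeasurableSpace Ω] (μ : Measure Ω) [IsProbabilityMeasure μ]
    (c B r : ℝ) : ∀ (n : ℕ) (f : (Fin n → Ω) → ℝ), Measurable f → (∀ s, |f s| ≤ B) →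
    (∀ s i x, |f (Function.update s i x) - f s| ≤ c) →
    ∫ s, Real.exp (r * f s) ∂(Measure.pi fun _ : Fin n => μ) ≤
      Real.exp (r * (∫ s, f s ∂(Measure.pi fun _ : Fin n => μ)) + n * ((c / 2) ^ 2 * r ^ 2 / 2)) := by
  intro n
  induction n with
  | zero =>
    intro f _ _ _
    have : f = fun _ => f default := funext fun s => congrArg f (Subsingleton.elim _ _)
    rw [this]
    simp
  | succ n ih =>
    intro f hf hB hd
    have hmp := (measurePreserving_piFinSuccAbove (fun _ : Fin (n + 1) => μ) 0).symm
    set e := (MeasurableEquiv.piFinSuccAbove (fun _ : Fin (n + 1) => Ω) 0).symm with he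
    have ee : ∀ x s, e (x, s) = Fin.cons x s := fun x s => by
      simp [he, MeasurableEquiv.piFinSuccAbove]
      rfl
    have e0 : ∀ x y s, e (y, s) = Function.update (e (x, s)) 0 y := by
      intro x y s
      rw [ee, ee, Fin.update_cons_zero]
    have e1 : ∀ x s i y, e (x, Function.update s i y) = Function.update (e (x, s)) i.succ y := by
      intro x s i y
      rw [ee, ee, Fin.cons_update]
    have hfe : Measurable fun p => f (e p) := hf.comp e.measurable
    rw [← hmp.integral_comp' (g := fun s => Real.exp (r * f s)), ← hmp.integral_comp' (g := f)]
    rw [integral_prod _ (integrable_exp_bdd hfe (fun _ => hB _) r),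
      integral_prod _ (integrable_bdd hfe (fun _ => hB _))]
    set g : Ω → ℝ := fun x => ∫ s, f (e (x, s)) ∂(Measure.pi fun _ : Fin n => μ) with hg
    have hgm : Measurable g :=
      (StronglyMeasurable.integral_prod_right' hfe.stronglyMeasurable).measurable
    have hgB : ∀ x, |g x| ≤ B := fun x => abs_integral_le_bdd fun s => hB _
    have hint : ∀ x, Integrable (fun s => f (e (x, s))) (Measure.pi fun _ : Fin n => μ) := fun x =>
      integrable_bdd (hfe.comp measurable_prodMk_left) fun s => hB _
    have hgc : ∀ x y, |g x - g y| ≤ c := by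
      intro x y
      rw [hg, ← integral_sub (hint x) (hint y)]
      refine abs_integral_le_bdd fun s => ?_
      rw [e0 y x s]
      exact hd _ _ _
    calc ∫ x, ∫ s, Real.exp (r * f (e (x, s))) ∂(Measure.pi fun _ : Fin n => μ) ∂μ
        ≤ ∫ x, Real.exp (r * g x) * Real.exp (n * ((c / 2) ^ 2 * r ^ 2 / 2)) ∂μ := by
          refine integral_mono ?_ ((integrable_exp_bdd hgm hgB r).mul_const _) fun x => ?_
          · exact (integrable_exp_bdd hfe (fun _ => hB _) r).integral_prod_left
          · have := ih (fun s => f (e (x, s))) (hfe.comp measurable_prodMk_left) (fun s => hB _)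
              (fun s i y => by rw [e1]; exact hd _ _ _)
            rwa [Real.exp_add] at this
      _ ≤ Real.exp (r * ∫ x, g x ∂μ + (c / 2) ^ 2 * r ^ 2 / 2) *
            Real.exp (n * ((c / 2) ^ 2 * r ^ 2 / 2)) := by
          rw [integral_mul_const]
          gcongr
          exact hoeffding_osc μ hgm hgB hgc r
      _ = _ := by
          rw [← Real.exp_add]
          congr 1
          push_cast
          ring

/-- McDiarmid's inequality, with the deviation chosen so that the tail probability is `e^{-t}`. -/
lemma mcdiarmid {Ω : Type*} [MeasurableSpace Ω] (μ : Measure Ω) [IsProbabilityMeasure μ]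
    {m : ℕ} (hm : 0 < m) {K B t : ℝ} (hK : 0 < K) (ht : 0 ≤ t) {f : (Fin m → Ω) → ℝ}
    (hf : Measurable f) (hB : ∀ s, |f s| ≤ B)
    (hd : ∀ s i x, |f (Function.update s i x) - f s| ≤ K / m) :
    (Measure.pi fun _ : Fin m => μ).real {s | (∫ s, f s ∂(Measure.pi fun _ : Fin m => μ)) +
      K * Real.sqrt (t / (2 * m)) ≤ f s} ≤ Real.exp (-t) := by
  set P := Measure.pi fun _ : Fin m => μ
  have hm' : (0 : ℝ) < m := by exact_mod_cast hm
  have hsub : ProbabilityTheory.HasSubgaussianMGF (fun s => f s - ∫ s, f s ∂P)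
      (Real.toNNReal (m * (K / m / 2) ^ 2)) P := by
    constructor
    · intro r
      refine integrable_exp_bdd (B := B + B) (by fun_prop) (fun s => ?_) r
      exact (abs_sub _ _).trans (add_le_add (hB s) (abs_integral_le_bdd hB))
    · intro r
      simp only [ProbabilityTheory.mgf, mul_sub, Real.exp_sub, integral_div]
      rw [div_le_iff₀ (Real.exp_pos _), ← Real.exp_add]
      refine (mcdiarmid_mgf μ (K / m) B r m f hf hB hd).trans (le_of_eq ?_)
      rw [Real.coe_toNNReal _ (by positivity)]
      congr 1
      ring
  have h := hsub.measure_ge_le (ε := K * Real.sqrt (t / (2 * m))) (by positivity)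
  rw [Real.coe_toNNReal _ (by positivity), mul_pow, Real.sq_sqrt (by positivity)] at h
  have e : -(K ^ 2 * (t / (2 * m))) / (2 * (m * (K / m / 2) ^ 2)) = -t := by
    field_simp
    try norm_num
  rw [e] at h
  convert h using 3
  ext s
  constructor <;> intro h <;> simp at h ⊢ <;> linarith

/-! ### Uniform deviations of weighted tails -/

lemma abs_iSup_sub_iSup_le {ι : Type*} [Nonempty ι] {a b : ι → ℝ} {B c : ℝ} (ha : ∀ i, |a i| ≤ B)
    (hb : ∀ i, |b i| ≤ B) (h : ∀ i, |a i - b i| ≤ c) : |(⨆ i, a i) - ⨆ i, b i| ≤ c := by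
  have hA : BddAbove (Set.range a) := ⟨B, by rintro _ ⟨x, rfl⟩; exact (abs_le.mp (ha x)).2⟩
  have hB : BddAbove (Set.range b) := ⟨B, by rintro _ ⟨x, rfl⟩; exact (abs_le.mp (hb x)).2⟩
  rw [abs_sub_le_iff]
  constructor
  · rw [sub_le_iff_le_add]
    exact ciSup_le fun i => by linarith [(abs_le.mp (h i)).2, le_ciSup hB i]
  · rw [sub_le_iff_le_add]
    exact ciSup_le fun i => by linarith [(abs_le.mp (h i)).1, le_ciSup hA i]

/-- The weighted tail indicator `w · 1{q < Z}`. -/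
noncomputable def tailFn {Ω : Type*} (w Z : Ω → ℝ) (q : ℝ) (p : Ω) : ℝ :=
  w p * (if q < Z p then 1 else 0)

/-- Uniform deviation of the empirical mean of `w · 1{q < Z}` from its expectation. The supremum
runs over rational thresholds to keep it measurable; by right-continuity this loses nothing
(`dev_le_supDev`). -/
noncomputable def supDev {Ω : Type*} [MeasurableSpace Ω] (μ : Measure Ω) (w Z : Ω → ℝ) {m : ℕ}
    (s : Fin m → Ω) : ℝ :=
  ⨆ q : ℚ, |(1 / m : ℝ) * ∑ i, tailFn w Z q (s i) - ∫ p, tailFn w Z q p ∂μ|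

/-- The symmetrized supremum: the signs encoded by `T` multiply the differences between the two
copies of the sample, which are stored together as a sample of pairs. -/
noncomputable def symSup {Ω : Type*} (w Z : Ω → ℝ) {m : ℕ} (T : Finset (Fin m))
    (p : Fin m → Ω × Ω) : ℝ :=
  ⨆ q : ℚ, |∑ i, sgn T i * (tailFn w Z q (p i).1 - tailFn w Z q (p i).2)|

lemma measurable_tailFn {Ω : Type*} [MeasurableSpace Ω] {w Z : Ω → ℝ} (hw : Measurable w)
    (hZ : Measurable Z) (q : ℝ) : Measurable (tailFn w Z q) :=
  hw.mul (Measurable.ite (measurableSet_lt measurable_const hZ) measurable_const measurable_const)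

lemma tailFn_mem {Ω : Type*} {w Z : Ω → ℝ} {W : ℝ} (hw : ∀ p, w p ∈ Set.Icc 0 W) (q : ℝ) (p : Ω) :
    tailFn w Z q p ∈ Set.Icc 0 W := by
  unfold tailFn
  obtain ⟨h0, h1⟩ := hw p
  split_ifs
  · simpa using ⟨h0, h1⟩
  · simpa using h0.trans h1

lemma avg_mem {m : ℕ} (hm : 0 < m) {W : ℝ} {a : Fin m → ℝ} (ha : ∀ i, a i ∈ Set.Icc 0 W) :
    (1 / m : ℝ) * ∑ i, a i ∈ Set.Icc 0 W := by
  have hm' : (0 : ℝ) < m := by exact_mod_cast hm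
  refine ⟨mul_nonneg (by positivity) (Finset.sum_nonneg fun i _ => (ha i).1), ?_⟩
  have : ∑ i, a i ≤ ∑ i : Fin m, W := Finset.sum_le_sum fun i _ => (ha i).2
  simp at this
  rw [one_div_mul_eq_div, div_le_iff₀ hm']
  linarith

/-- Bounded differences of a sample mean. -/
lemma avg_update {Ω : Type*} {m : ℕ} {W : ℝ} {h : Ω → ℝ}
    (hh : ∀ p, h p ∈ Set.Icc 0 W) (s : Fin m → Ω) (i : Fin m) (x : Ω) :
    |(1 / m : ℝ) * ∑ j, h (Function.update s i x j) - (1 / m : ℝ) * ∑ j, h (s j)| ≤ W / m := by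
  rw [← mul_sub, ← Finset.sum_sub_distrib, Finset.sum_eq_single i]
  · rw [Function.update_self, abs_mul, abs_of_nonneg (by positivity), one_div_mul_eq_div]
    gcongr
    obtain ⟨h1, h2⟩ := hh x
    obtain ⟨h3, h4⟩ := hh (s i)
    exact abs_le.mpr ⟨by linarith, by linarith⟩
  · intro j _ hj
    rw [Function.update_of_ne hj, sub_self]
  · simp

lemma measurable_supDev {Ω : Type*} [MeasurableSpace Ω] {μ : Measure Ω} {w Z : Ω → ℝ} {m : ℕ}
    (hwm : Measurable w) (hZ : Measurable Z) :
    Measurable (supDev μ w Z (m := m)) := by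
  unfold supDev
  refine Measurable.iSup fun q => ?_
  have := measurable_tailFn hwm hZ q
  fun_prop

section Sym
variable {Ω : Type*} {w Z : Ω → ℝ} {W : ℝ} {m : ℕ}

lemma sym_le (hw : ∀ p, w p ∈ Set.Icc 0 W) (T : Finset (Fin m)) (p : Fin m → Ω × Ω) (q : ℝ) :
    |∑ i, sgn T i * (tailFn w Z q (p i).1 - tailFn w Z q (p i).2)| ≤ m * W := by
  refine (Finset.abs_sum_le_sum_abs _ _).trans ?_
  have : ∑ i : Fin m, |sgn T i * (tailFn w Z q (p i).1 - tailFn w Z q (p i).2)| ≤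
      ∑ i : Fin m, W := by
    refine Finset.sum_le_sum fun i _ => ?_
    obtain ⟨h1, h2⟩ := tailFn_mem (Z := Z) hw q (p i).1
    obtain ⟨h3, h4⟩ := tailFn_mem (Z := Z) hw q (p i).2
    have : |sgn T i| = 1 := by unfold sgn; split_ifs <;> simp
    rw [abs_mul, this, one_mul]
    exact abs_le.mpr ⟨by linarith, by linarith⟩
  simpa using this

lemma le_symSup (hw : ∀ p, w p ∈ Set.Icc 0 W) (T : Finset (Fin m)) (p : Fin m → Ω × Ω) (q : ℚ) :
    |∑ i, sgn T i * (tailFn w Z q (p i).1 - tailFn w Z q (p i).2)| ≤ symSup w Z T p :=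
  le_ciSup (f := fun q : ℚ => |∑ i, sgn T i * (tailFn w Z q (p i).1 - tailFn w Z q (p i).2)|)
    ⟨m * W, by rintro _ ⟨q, rfl⟩; exact sym_le hw T p q⟩ q

lemma symSup_bdd (hw : ∀ p, w p ∈ Set.Icc 0 W) (T : Finset (Fin m)) (p : Fin m → Ω × Ω) :
    |symSup w Z T p| ≤ m * W := by
  rw [abs_of_nonneg ((abs_nonneg _).trans (le_symSup hw T p 0))]
  exact ciSup_le fun q => sym_le hw T p q

/-- For fixed data, averaging over the signs costs only a factor of order `√m`, by the maximal
inequality applied to each of the two copies. -/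
lemma sum_symSup_le (hw : ∀ p, w p ∈ Set.Icc 0 W) (p : Fin m → Ω × Ω) :
    ∑ T, symSup w Z T p ≤ 2 ^ m * (4 * W * Real.sqrt m) := by
  obtain ⟨R₁, h₁, hs₁⟩ := mean_max_signs W (fun i => w (p i).1) (fun i => Z (p i).1)
    (fun i => hw _)
  obtain ⟨R₂, h₂, hs₂⟩ := mean_max_signs W (fun i => w (p i).2) (fun i => Z (p i).2)
    (fun i => hw _)
  have : ∀ T, symSup w Z T p ≤ R₁ T + R₂ T := fun T => by
    refine ciSup_le fun q => ?_
    simp only [mul_sub, Finset.sum_sub_distrib]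
    exact (abs_sub _ _).trans (add_le_add (h₁ T q) (h₂ T q))
  calc ∑ T, symSup w Z T p ≤ ∑ T, (R₁ T + R₂ T) := Finset.sum_le_sum fun T _ => this T
    _ = ∑ T, R₁ T + ∑ T, R₂ T := Finset.sum_add_distrib
    _ ≤ _ := by linarith

end Sym

section Dev
variable {Ω : Type*} [MeasurableSpace Ω] {μ : Measure Ω} [IsProbabilityMeasure μ] {w Z : Ω → ℝ}
  {W : ℝ} {m : ℕ}

lemma integral_tailFn_mem (hw : ∀ p, w p ∈ Set.Icc 0 W) (q : ℝ) : ∫ p, tailFn w Z q p ∂μ ∈ Set.Icc 0 W := by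
  refine ⟨integral_nonneg fun p => (tailFn_mem hw q p).1, ?_⟩
  exact (le_abs_self _).trans (abs_integral_le_bdd fun p =>
    (abs_of_nonneg (tailFn_mem hw q p).1).le.trans (tailFn_mem hw q p).2)

lemma dev_le (hm : 0 < m) (hw : ∀ p, w p ∈ Set.Icc 0 W) (s : Fin m → Ω) (q : ℝ) :
    |(1 / m : ℝ) * ∑ i, tailFn w Z q (s i) - ∫ p, tailFn w Z q p ∂μ| ≤ W := by
  obtain ⟨h1, h2⟩ := avg_mem hm fun i => tailFn_mem (Z := Z) hw q (s i)
  obtain ⟨h3, h4⟩ := integral_tailFn_mem (μ := μ) hw q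
  exact abs_le.mpr ⟨by linarith, by linarith⟩

lemma le_supDev (hm : 0 < m) (hw : ∀ p, w p ∈ Set.Icc 0 W) (s : Fin m → Ω) (q : ℚ) :
    |(1 / m : ℝ) * ∑ i, tailFn w Z q (s i) - ∫ p, tailFn w Z q p ∂μ| ≤ supDev μ w Z s :=
  le_ciSup (f := fun q : ℚ => |(1 / m : ℝ) * ∑ i, tailFn w Z q (s i) - ∫ p, tailFn w Z q p ∂μ|)
    ⟨W, by rintro _ ⟨q, rfl⟩; exact dev_le hm hw s q⟩ q

lemma supDev_bdd (hm : 0 < m) (hw : ∀ p, w p ∈ Set.Icc 0 W) (s : Fin m → Ω) : |supDev μ w Z s| ≤ W := by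
  rw [abs_of_nonneg ((abs_nonneg _).trans (le_supDev hm hw s 0))]
  exact ciSup_le fun q => dev_le hm hw s q

lemma supDev_update (hm : 0 < m) (hw : ∀ p, w p ∈ Set.Icc 0 W) (s : Fin m → Ω) (i : Fin m) (x : Ω) :
    |supDev μ w Z (Function.update s i x) - supDev μ w Z s| ≤ W / m := by
  refine abs_iSup_sub_iSup_le (B := W) (fun q => ?_) (fun q => ?_) fun q => ?_
  · rw [abs_abs]; exact dev_le hm hw _ q
  · rw [abs_abs]; exact dev_le hm hw _ q
  · refine (abs_abs_sub_abs_le_abs_sub _ _).trans ?_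
    rw [sub_sub_sub_cancel_right]
    exact avg_update (tailFn_mem hw q) s i x

lemma measurable_symSup (hwm : Measurable w) (hZ : Measurable Z) (T : Finset (Fin m)) :
    Measurable (symSup w Z T) := by
  unfold symSup
  refine Measurable.iSup fun q => ?_
  have := measurable_tailFn hwm hZ q
  fun_prop

/-- Changing a sign amounts to exchanging the two copies of a sample point, which preserves the law
of the pairs. -/
lemma integral_symSup_eq (hwm : Measurable w) (hZ : Measurable Z) (T : Finset (Fin m)) :
    ∫ p, symSup w Z T p ∂(Measure.pi fun _ : Fin m => μ.prod μ) =
      ∫ p, symSup w Z Finset.univ p ∂(Measure.pi fun _ : Fin m => μ.prod μ) := by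
  have hmp := measurePreserving_pi (fun _ : Fin m => μ.prod μ) (fun _ => μ.prod μ)
    (f := fun i => if i ∈ T then id else Prod.swap) (fun i => by
      split_ifs
      · exact MeasurePreserving.id _
      · exact Measure.measurePreserving_swap)
  conv_rhs => rw [← hmp.map_eq]
  rw [integral_map hmp.measurable.aemeasurable (measurable_symSup hwm hZ _).aestronglyMeasurable]
  congr 1
  ext p
  unfold symSup
  congr 1
  ext q
  congr 1
  refine Finset.sum_congr rfl fun i _ => ?_
  by_cases h : i ∈ T <;> simp [sgn, h]

lemma integral_symSup_le (hwm : Measurable w) (hZ : Measurable Z) (hw : ∀ p, w p ∈ Set.Icc 0 W) :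
    ∫ p, symSup w Z Finset.univ p ∂(Measure.pi fun _ : Fin m => μ.prod μ) ≤
      4 * W * Real.sqrt m := by
  have hint : ∀ T : Finset (Fin m),
      Integrable (symSup w Z T) (Measure.pi fun _ : Fin m => μ.prod μ) :=
    fun T => integrable_bdd (measurable_symSup hwm hZ T) (symSup_bdd hw T)
  have h : ∑ T : Finset (Fin m), ∫ p, symSup w Z T p ∂(Measure.pi fun _ : Fin m => μ.prod μ) ≤
      2 ^ m * (4 * W * Real.sqrt m) := by
    rw [← integral_finsetSum _ fun T _ => hint T]
    refine (integral_mono (integrable_finsetSum _ fun T _ => hint T) (integrable_const _)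
      fun p => sum_symSup_le hw p).trans ?_
    simp
  rw [Finset.sum_congr rfl fun T _ => integral_symSup_eq hwm hZ T] at h
  simp at h
  exact h

/-- Symmetrization: by Jensen's inequality the deviation from the expectation is dominated by the
mean deviation from an independent copy of the sample. -/
lemma integral_supDev_le (hm : 0 < m) (hwm : Measurable w) (hZ : Measurable Z)
    (hw : ∀ p, w p ∈ Set.Icc 0 W) :
    ∫ s, supDev μ w Z s ∂(Measure.pi fun _ : Fin m => μ) ≤ 4 * W / Real.sqrt m := by
  have hm' : (0 : ℝ) < m := by exact_mod_cast hm
  set P := Measure.pi fun _ : Fin m => μ with hP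
  have hmp := (measurePreserving_arrowProdEquivProdArrow Ω Ω (Fin m) (fun _ => μ)
    (fun _ => μ)).symm
  set e := (MeasurableEquiv.arrowProdEquivProdArrow Ω Ω (Fin m)).symm with he
  have ee : ∀ s s' i, e (s, s') i = (s i, s' i) := fun _ _ _ => rfl
  have hmeas : Measurable fun x => symSup w Z Finset.univ (e x) :=
    (measurable_symSup hwm hZ _).comp e.measurable
  have hI : Integrable (fun x => symSup w Z Finset.univ (e x)) (P.prod P) :=
    integrable_bdd hmeas fun x => symSup_bdd hw _ _
  have hpt : ∀ s, supDev μ w Z s ≤ (1 / m : ℝ) * ∫ s', symSup w Z Finset.univ (e (s, s')) ∂P := by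
    intro s
    refine ciSup_le fun q => ?_
    have hi : ∀ i : Fin m, Integrable (fun s' : Fin m → Ω => tailFn w Z q (s' i)) P := fun i =>
      integrable_bdd (B := W) ((measurable_tailFn hwm hZ q).comp (measurable_pi_apply i))
        fun s' => (abs_of_nonneg (tailFn_mem hw q _).1).le.trans (tailFn_mem hw q _).2
    have hrep : (1 / m : ℝ) * ∑ i, tailFn w Z q (s i) - ∫ p, tailFn w Z q p ∂μ =
        (1 / m : ℝ) * ∫ s', ∑ i, (tailFn w Z q (s i) - tailFn w Z q (s' i)) ∂P := by
      rw [integral_finsetSum _ fun i _ =>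
        show Integrable (fun s' => tailFn w Z q (s i) - tailFn w Z q (s' i)) P from
          (integrable_const _).sub (hi i)]
      have : ∀ i : Fin m, ∫ s', (tailFn w Z q (s i) - tailFn w Z q (s' i)) ∂P =
          tailFn w Z q (s i) - ∫ p, tailFn w Z q p ∂μ := fun i => by
        rw [integral_sub (integrable_const _) (hi i), hP,
          integral_comp_eval (μ := fun _ : Fin m => μ)
            (measurable_tailFn hwm hZ q).aestronglyMeasurable]
        simp
      rw [Finset.sum_congr rfl fun i _ => this i, Finset.sum_sub_distrib]
      simp
      field_simp
    rw [hrep, abs_mul, abs_of_nonneg (by positivity)]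
    gcongr
    refine (abs_integral_le_integral_abs).trans ?_
    refine integral_mono (integrable_finsetSum _ fun i _ => (integrable_const _).sub (hi i)).abs
      (integrable_bdd (hmeas.comp measurable_prodMk_left) fun x => symSup_bdd hw _ _) fun s' => ?_
    have := le_symSup (Z := Z) hw Finset.univ (e (s, s')) q
    simpa [sgn, ee] using this
  calc ∫ s, supDev μ w Z s ∂P
      ≤ ∫ s, (1 / m : ℝ) * ∫ s', symSup w Z Finset.univ (e (s, s')) ∂P ∂P :=
        integral_mono (integrable_bdd (measurable_supDev hwm hZ) (supDev_bdd hm hw))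
          (hI.integral_prod_left.const_mul _) hpt
    _ = (1 / m : ℝ) * ∫ p, symSup w Z Finset.univ p ∂(Measure.pi fun _ : Fin m => μ.prod μ) := by
        rw [integral_const_mul, ← integral_prod _ hI, ← hmp.integral_comp']
    _ ≤ (1 / m : ℝ) * (4 * W * Real.sqrt m) := by
        gcongr
        exact integral_symSup_le hwm hZ hw
    _ = 4 * W / Real.sqrt m := by
        have := Real.mul_self_sqrt hm'.le
        have h0 : 0 < Real.sqrt m := Real.sqrt_pos.mpr hm'
        field_simp
        linear_combination W * this

/-- Every real threshold is a limit of rational ones from the right, along which the tails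
converge. -/
lemma dev_le_supDev (hm : 0 < m) (hwm : Measurable w) (hZ : Measurable Z)
    (hw : ∀ p, w p ∈ Set.Icc 0 W) (s : Fin m → Ω) (l : ℝ) :
    |(1 / m : ℝ) * ∑ i, tailFn w Z l (s i) - ∫ p, tailFn w Z l p ∂μ| ≤ supDev μ w Z s := by
  obtain ⟨u, -, hu, hlim⟩ := Real.exists_seq_rat_strictAnti_tendsto l
  have hpt : ∀ p, Filter.Tendsto (fun n => tailFn w Z (u n) p) Filter.atTop
      (nhds (tailFn w Z l p)) := by
    intro p
    refine tendsto_const_nhds.congr' ?_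
    by_cases h : l < Z p
    · filter_upwards [hlim.eventually (eventually_lt_nhds h)] with n hn
      simp [tailFn, h, hn]
    · refine Filter.Eventually.of_forall fun n => ?_
      have : ¬ (u n : ℝ) < Z p := fun h' => h ((hu n).trans h')
      simp [tailFn, h, this]
  have hint : Filter.Tendsto (fun n => ∫ p, tailFn w Z (u n) p ∂μ) Filter.atTop
      (nhds (∫ p, tailFn w Z l p ∂μ)) :=
    tendsto_integral_of_dominated_convergence (fun _ => W)
      (fun n => (measurable_tailFn hwm hZ _).aestronglyMeasurable) (integrable_const _)
      (fun n => Filter.Eventually.of_forall fun p =>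
        (abs_of_nonneg (tailFn_mem hw _ p).1).le.trans (tailFn_mem hw _ p).2)
      (Filter.Eventually.of_forall hpt)
  have hsum := (tendsto_finsetSum (Finset.univ : Finset (Fin m)) fun i _ => hpt (s i)).const_mul
    (1 / m : ℝ)
  exact le_of_tendsto (hsum.sub hint).abs
    (Filter.Eventually.of_forall fun n => le_supDev hm hw s (u n))

end Dev

/-! ### The coverage bound -/

lemma toReal_withDensity_tail {Ω : Type*} [MeasurableSpace Ω] {μ : Measure Ω}
    {w Z : Ω → ℝ} (hwm : Measurable w) (hZ : Measurable Z) (hw : ∀ p, 0 ≤ w p) (l : ℝ) :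
    (μ.withDensity (fun p => ENNReal.ofReal (w p)) {p | l < Z p}).toReal =
      ∫ p, tailFn w Z l p ∂μ := by
  have hA : MeasurableSet {p | l < Z p} := measurableSet_lt measurable_const hZ
  rw [withDensity_apply _ hA, ← lintegral_indicator hA, integral_eq_lintegral_of_nonneg_ae]
  · congr 2
    ext p
    by_cases h : l < Z p <;> simp [tailFn, Set.indicator, h]
  · refine Filter.Eventually.of_forall fun p => ?_
    exact mul_nonneg (hw p) (by split_ifs <;> norm_num)
  · exact (measurable_tailFn hwm hZ l).aestronglyMeasurable

/-- Theorem 3 of the paper: there is a universal constant `C > 0` such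
that, with probability at least `1 − 2e^{−t}` over the source sample, the target
coverage of the shrunk band `λ̂(α)·f̂` deviates from `α` by at most
`W′/m + E_S|ŵ − w₀| + (2W + W′)√(t/(2m)) + C·W/√m`. Covariate shift is encoded by
`P_T = P_S.withDensity (w₀ ∘ fst)`. -/
theorem stmt3 : ∃ C : ℝ, 0 < C ∧
    ∀ (𝒳 : Type u) [MeasurableSpace 𝒳]
      (P_S P_T : Measure (𝒳 × ℝ)) [IsProbabilityMeasure P_S] [IsProbabilityMeasure P_T]
      (w₀ : 𝒳 → ℝ) (W : ℝ) (what : 𝒳 → ℝ) (W' : ℝ) (fhat : 𝒳 → ℝ)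
      (m : ℕ) (α t : ℝ),
      Measurable w₀ → (∀ x, 0 ≤ w₀ x) → (∀ x, w₀ x ≤ W) →
      P_T = P_S.withDensity (fun p => ENNReal.ofReal (w₀ p.1)) →
      Measurable what → (∀ x, 0 ≤ what x) → (∀ x, what x ≤ W') →
      Measurable fhat → (∀ x, 0 < fhat x) →
      0 < m → α ∈ Set.Ioo (0 : ℝ) 1 →
      (∀ᵐ s ∂(Measure.pi fun _ : Fin m => P_S),
        (∀ i, 0 < ((s i).2) ^ 2 / fhat ((s i).1)) ∧
          Function.Injective fun i : Fin m => ((s i).2) ^ 2 / fhat ((s i).1)) →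
      0 < t →
      1 - 2 * Real.exp (-t) ≤
        ((Measure.pi fun _ : Fin m => P_S)
          {s : Fin m → 𝒳 × ℝ |
            |(P_T {p : 𝒳 × ℝ |
                (sInf {lam : ℝ | 0 ≤ lam ∧
                    (1 / m : ℝ) * ∑ i, what ((s i).1) *
                      (if lam * fhat ((s i).1) < ((s i).2) ^ 2 then (1 : ℝ) else 0) ≤ α})
                  * fhat p.1 < p.2 ^ 2}).toReal - α|
              ≤ W' / m + (∫ p : 𝒳 × ℝ, |what p.1 - w₀ p.1| ∂P_S)
                + (2 * W + W') * Real.sqrt (t / (2 * m))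
                + C * W / Real.sqrt m}).toReal := by
  refine ⟨4, by norm_num, ?_⟩
  intro 𝒳 _ P_S P_T _ _ w₀ W what W' fhat m α t hw₀ hw0 hwW hPT hwh hwh0 hwhW hf hfpos hm hα hae ht
  have hm' : (0 : ℝ) < m := by exact_mod_cast hm
  set w : 𝒳 × ℝ → ℝ := fun p => w₀ p.1 with hwdef
  set Z : 𝒳 × ℝ → ℝ := fun p => p.2 ^ 2 / fhat p.1 with hZdef
  have hwm : Measurable w := hw₀.comp measurable_fst
  have hZ : Measurable Z := by fun_prop
  have hw : ∀ p, w p ∈ Set.Icc 0 W := fun p => ⟨hw0 _, hwW _⟩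
  have hiff : ∀ (l : ℝ) (p : 𝒳 × ℝ), l * fhat p.1 < p.2 ^ 2 ↔ l < Z p := fun l p =>
    (lt_div_iff₀ (hfpos _)).symm
  -- A density bounded by `W ≤ 0` would vanish, contradicting that `P_T` has mass one.
  have hWpos : 0 < W := by
    by_contra hcon
    have h1 : P_T Set.univ = 0 := by
      rw [hPT, withDensity_apply _ MeasurableSet.univ]
      have : ∀ p : 𝒳 × ℝ, ENNReal.ofReal (w₀ p.1) = 0 := fun p =>
        ENNReal.ofReal_eq_zero.mpr ((hwW _).trans (not_lt.mp hcon))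
      simp [this]
    simp at h1
  set K := max W W' with hK
  have hKpos : 0 < K := lt_max_of_lt_left hWpos
  set d : 𝒳 × ℝ → ℝ := fun p => |what p.1 - w₀ p.1| with hd
  have hdm : Measurable d := by fun_prop
  have hdK : ∀ p, d p ∈ Set.Icc 0 K := fun p => ⟨abs_nonneg _, by
    have h1 := hwW p.1
    have h2 := hwhW p.1
    have h3 := hw0 p.1
    have h4 := hwh0 p.1
    have h5 := le_max_left W W'
    have h6 := le_max_right W W'
    exact abs_le.mpr ⟨by linarith, by linarith⟩⟩
  have hG : ∀ l : ℝ, (P_T {p | l < Z p}).toReal = ∫ p, tailFn w Z l p ∂P_S := fun l => by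
    rw [hPT]
    exact toReal_withDensity_tail hwm hZ (fun p => (hw p).1) l
  set P := Measure.pi fun _ : Fin m => P_S with hP
  -- The ratios are positive almost surely, so the tail of `P_T` at level `0` has mass one.
  have hG0 : ∫ p, tailFn w Z 0 p ∂P_S = 1 := by
    rw [← hG]
    have h1 : ∀ᵐ p ∂P_S, 0 < Z p := by
      rw [← (measurePreserving_eval (fun _ : Fin m => P_S) ⟨0, hm⟩).map_eq]
      refine (ae_map_iff (measurable_pi_apply (⟨0, hm⟩ : Fin m)).aemeasurable
        (measurableSet_lt measurable_const hZ)).mpr ?_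
      filter_upwards [hae] with s hs using hs.1 _
    have h2 : ∀ᵐ p ∂P_T, 0 < Z p := by
      rw [hPT]
      exact (withDensity_absolutelyContinuous _ _).ae_le h1
    have h3 : P_T {p | 0 < Z p} = 1 :=
      (mem_ae_iff_prob_eq_one (measurableSet_lt measurable_const hZ)).mp h2
    rw [h3, ENNReal.toReal_one]
  set A : (Fin m → 𝒳 × ℝ) → ℝ := fun s => (1 / m : ℝ) * ∑ i, d (s i) with hA
  have hAint : ∫ s, A s ∂P = ∫ p, d p ∂P_S := by
    have hi : ∀ i : Fin m, Integrable (fun s : Fin m → 𝒳 × ℝ => d (s i)) P := fun i =>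
      integrable_bdd (B := K) (hdm.comp (measurable_pi_apply i))
        fun s => (abs_of_nonneg (hdK _).1).le.trans (hdK _).2
    rw [hA, integral_const_mul, integral_finsetSum _ fun i _ => hi i]
    have : ∀ i : Fin m, ∫ s, d (s i) ∂P = ∫ p, d p ∂P_S := fun i => by
      rw [hP, integral_comp_eval (μ := fun _ : Fin m => P_S) hdm.aestronglyMeasurable]
    rw [Finset.sum_congr rfl fun i _ => this i]
    simp
    field_simp
  have hbad₁ := mcdiarmid P_S hm hWpos ht.le (measurable_supDev (μ := P_S) (m := m) hwm hZ)
    (supDev_bdd hm hw) (supDev_update hm hw)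
  have hbad₂ := mcdiarmid P_S hm hKpos ht.le (f := A) (by fun_prop) (B := K)
    (fun s => by
      obtain ⟨h1, h2⟩ := avg_mem hm fun i => hdK (s i)
      exact (abs_of_nonneg h1).le.trans h2)
    (fun s i x => avg_update hdK s i x)
  set bad₁ := {s | (∫ s, supDev P_S w Z s ∂P) + W * Real.sqrt (t / (2 * m)) ≤ supDev P_S w Z s}
  set bad₂ := {s | (∫ s, A s ∂P) + K * Real.sqrt (t / (2 * m)) ≤ A s}
  set N := {s : Fin m → 𝒳 × ℝ | ¬ ((∀ i, 0 < ((s i).2) ^ 2 / fhat ((s i).1)) ∧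
          Function.Injective fun i : Fin m => ((s i).2) ^ 2 / fhat ((s i).1))} with hN
  have hN0 : P.real N = 0 := by
    rw [measureReal_def, ae_iff.mp hae, ENNReal.toReal_zero]
  -- No measurability of the good event is needed: it is enough that it covers the complement of
  -- three events of small measure.
  have key : ∀ good : Set (Fin m → 𝒳 × ℝ), Set.univ ⊆ good ∪ (bad₁ ∪ bad₂ ∪ N) →
      1 - 2 * Real.exp (-t) ≤ (P good).toReal := by
    intro good hcover
    have hone : 1 ≤ P.real good + (P.real bad₁ + P.real bad₂ + P.real N) := by
      calc (1 : ℝ) = P.real Set.univ := by simp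
        _ ≤ P.real (good ∪ (bad₁ ∪ bad₂ ∪ N)) := measureReal_mono hcover
        _ ≤ P.real good + P.real (bad₁ ∪ bad₂ ∪ N) := measureReal_union_le _ _
        _ ≤ P.real good + (P.real (bad₁ ∪ bad₂) + P.real N) := by
            gcongr; exact measureReal_union_le _ _
        _ ≤ _ := by gcongr; exact measureReal_union_le _ _
    change _ ≤ P.real good
    linarith
  refine key _ ?_
  intro s _
  by_cases hs : s ∈ bad₁ ∪ bad₂ ∪ N
  · exact Or.inr hs
  left
  simp only [Set.mem_union, not_or] at hs
  obtain ⟨⟨hs₁, hs₂⟩, hsN⟩ := hs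
  have hs₁ : supDev P_S w Z s < _ := not_le.mp hs₁
  have hs₂ : A s < _ := not_le.mp hs₂
  obtain ⟨-, hinj⟩ := not_not.mp hsN
  rw [hAint] at hs₂
  have hE : ∫ s, supDev P_S w Z s ∂P ≤ 4 * W / Real.sqrt m :=
      integral_supDev_le (μ := P_S) hm hwm hZ hw
  rw [Set.mem_ofPred_eq]
  simp only [hG, hiff]
  generalize hL : sInf {lam : ℝ | 0 ≤ lam ∧ (1 / m : ℝ) * ∑ i, what ((s i).1) *
                    (if lam < Z (s i) then (1 : ℝ) else 0) ≤ α} = L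
  obtain ⟨hq₁, hq₂⟩ := quantile_spec hm (fun i => Z (s i)) (fun i => what (s i).1) W' α
    (fun i => hwh0 _) (fun i => hwhW _) hinj hα.1 L hL.symm
  have hdev := dev_le_supDev (μ := P_S) hm hwm hZ hw s L
  have hdiff : |(1 / m : ℝ) * ∑ i, what (s i).1 * (if L < Z (s i) then (1 : ℝ) else 0) -
      (1 / m : ℝ) * ∑ i, tailFn w Z L (s i)| ≤ A s := by
    rw [← mul_sub, ← Finset.sum_sub_distrib, abs_mul, abs_of_nonneg (by positivity)]
    refine mul_le_mul_of_nonneg_left ((Finset.abs_sum_le_sum_abs _ _).trans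
      (Finset.sum_le_sum fun i _ => ?_)) (by positivity)
    simp only [tailFn, hwdef, hd]
    split_ifs <;> simp
  have hW'0 : 0 ≤ W' := (hwh0 (s ⟨0, hm⟩).1).trans (hwhW _)
  have hW'm : 0 ≤ W' / m := by positivity
  -- The uniform deviation carries the factor W and the weight error the factor K, hence 2W + W' in total.
  have hKW : K ≤ W + W' := max_le (by linarith) (by linarith)
  have hKs := mul_le_mul_of_nonneg_right hKW (Real.sqrt_nonneg (t / (2 * m)))
  have hS0 : 0 ≤ supDev P_S w Z s := (abs_nonneg _).trans hdev
  have hA0 : 0 ≤ A s := (abs_nonneg _).trans hdiff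
  rw [abs_le] at hdev hdiff ⊢
  obtain ⟨d1, d2⟩ := hdev
  obtain ⟨d3, d4⟩ := hdiff
  constructor
  -- At L = 0 the empirical tail may be far below α, but the target tail is 1, which exceeds α.
  · rcases hq₂ with h0 | h0
    · have hα1 := hα.2
      rw [h0, hG0]
      linarith
    · linarith
  · linarith
end

section
/- Let (X₁,Y₁),…,(X_m,Y_m) be i.i.d. with law P_S, and let T̂₀ : 𝒳_T → 𝒳_S be a fixed measurable map with E_T[‖T̂₀(X) − T₀(X)‖] < ∞. Define Δ = inf{E_T[f(T₀(X))] : f ∈ 𝓕 and Y² ≤ f(T₀(X)) almost surely under P_T}, assumed finite. Then for every t > 0, with probability at least 1 − e^{−t}: every f̂ ∈ 𝓕 satisfying f̂(Xᵢ) ≥ Yᵢ² for all i ≤ m and (1/m)Σᵢ f̂(Xᵢ) ≤ (1/m)Σᵢ f(Xᵢ) for every f ∈ 𝓕 with f(Xᵢ) ≥ Yᵢ² for all i (i.e. every minimizer of the empirical width over the empirically feasible functions) satisfies E_T[f̂(T̂₀(X))] ≤ Δ + 4·R_m(𝓕) + L_𝓕·E_T[‖T̂₀(X) − T₀(X)‖]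 + 4·B_𝓕·√(t/(2m)), where R_m(𝓕) is the Rademacher complexity with respect to the source covariate sample. -/
/-! Under the domain-shift assumption `(T₀ X, Y)` with `(X, Y) ∼ P_T` has law `P_S`
(`ae_source_of_ae_target`). Hence a function feasible for the target is feasible on almost every
source sample (simultaneously for all of them, the class being countable), and the empirical width
of `f̂` is at most that of each target-feasible `f`. Passing from empirical to population widths of
`f̂` and `f` costs twice the uniform deviation `G = sup_f |(1/m) Σ f(Xᵢ) - E f(X)|`; taking the
infimum over `f` bounds `E_T f̂(T₀ X)` by `Δ + 2G`, and the Lipschitz property turns `T₀` into `T̂₀`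
at cost `L E‖T̂₀ - T₀‖`.

It remains to see that `G ≤ 2 R_m + 2B√(t/(2m))` with probability at least `1 - exp(-t)`.
The mean of `G` is at most `2 R_m` by symmetrization (`dev_integral_le_rademacher`), and `G` has
differences bounded by `2B/m` in each coordinate, so McDiarmid's inequality
(`mcdiarmid_hasSubgaussianMGF`, `dev_tail`) bounds its fluctuation.
-/

open MeasureTheory ProbabilityTheory

/-- Rademacher complexity of a class `𝓖` of real functions with respect to `n` i.i.d.
points drawn from `ν`. -/
noncomputable def rademacher {𝒳 : Type*} [MeasurableSpace 𝒳]
    (n : ℕ) (𝓖 : Set (𝒳 → ℝ)) (ν : Measure 𝒳) : ℝ :=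
  ∫ p : (Fin n → 𝒳) × (Fin n → Bool),
    sSup ((fun g : 𝒳 → ℝ =>
      |(1 / n : ℝ) * ∑ j, (if p.2 j then (1 : ℝ) else -1) * g (p.1 j)|) '' 𝓖)
    ∂((Measure.pi fun _ : Fin n => ν).prod
        (Measure.pi fun _ : Fin n => (PMF.uniformOfFintype Bool).toMeasure))

/-! ### Suprema of countable families -/

/-- The pointwise supremum `w ↦ supᵢ |Fᵢ(w)|` of a family of real functions. It is only
used for families with `|Fᵢ(w)|` bounded in `i`, where the supremum is a genuine one. -/
noncomputable def supAbs {ι α : Type*} (F : ι → α → ℝ) (w : α) : ℝ := ⨆ i, |F i w|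

lemma supAbs_measurable {ι α : Type*} [MeasurableSpace α] [Countable ι] {F : ι → α → ℝ}
    (hF : ∀ i, Measurable (F i)) : Measurable (supAbs F) :=
  Measurable.iSup fun i => (hF i).abs

lemma le_supAbs {ι α : Type*} {F : ι → α → ℝ} {C : ℝ} {w : α} (hC : ∀ i, |F i w| ≤ C) (i : ι) :
    |F i w| ≤ supAbs F w :=
  le_ciSup (f := fun i => |F i w|) ⟨C, by rintro _ ⟨j, rfl⟩; exact hC j⟩ i

lemma supAbs_nonneg {ι α : Type*} (F : ι → α → ℝ) (w : α) : 0 ≤ supAbs F w :=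
  Real.iSup_nonneg fun _ => abs_nonneg _

lemma abs_supAbs_le {ι α : Type*} [Nonempty ι] {F : ι → α → ℝ} {C : ℝ} {w : α}
    (hC : ∀ i, |F i w| ≤ C) : |supAbs F w| ≤ C := by
  rw [abs_of_nonneg (supAbs_nonneg F w)]
  exact ciSup_le hC

lemma supAbs_integrable {ι α : Type*} [MeasurableSpace α] [Countable ι] [Nonempty ι]
    {F : ι → α → ℝ} (hF : ∀ i, Measurable (F i))
    {C : ℝ} (hC : ∀ i w, |F i w| ≤ C) (μ : Measure α) [IsFiniteMeasure μ] :
    Integrable (supAbs F) μ :=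
  .of_bound (supAbs_measurable hF).aestronglyMeasurable C
    (.of_forall fun w => abs_supAbs_le fun i => hC i w)

lemma supAbs_le_add {ι α : Type*} [Nonempty ι] {F : ι → α → ℝ} {C c : ℝ}
    (hC : ∀ i w, |F i w| ≤ C) {w w' : α} (h : ∀ i, |F i w - F i w'| ≤ c) :
    supAbs F w ≤ supAbs F w' + c := by
  refine ciSup_le fun i => ?_
  have h1 := abs_add_le (F i w - F i w') (F i w')
  rw [sub_add_cancel] at h1
  linarith [h i, le_supAbs (F := F) (w := w') (fun j => hC j w') i]

lemma integrable_of_abs_le {α : Type*} [MeasurableSpace α] {ρ : Measure α} [IsFiniteMeasure ρ]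
    {h : α → ℝ} {C : ℝ} (hm : Measurable h) (hb : ∀ x, |h x| ≤ C) : Integrable h ρ :=
  .of_bound hm.aestronglyMeasurable C (.of_forall hb)

lemma integrable_exp_of_abs_le {α : Type*} [MeasurableSpace α] (ρ : Measure α)
    [IsFiniteMeasure ρ] {h : α → ℝ} {K : ℝ} (l e : ℝ) (hm : Measurable h)
    (hb : ∀ x, |h x| ≤ K) : Integrable (fun x => Real.exp (l * (h x - e))) ρ := by
  refine .of_bound (by fun_prop) (Real.exp (|l| * (K + |e|))) (.of_forall fun x => ?_)
  rw [Real.norm_eq_abs, Real.abs_exp, Real.exp_le_exp]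
  refine (le_abs_self _).trans ?_
  rw [abs_mul]
  exact mul_le_mul_of_nonneg_left ((abs_sub _ _).trans (by gcongr; exact hb x)) (abs_nonneg l)

/-! ### The bounded differences inequality -/

/-- McDiarmid's inequality as a moment generating function bound: a bounded function of `n`
i.i.d. points that varies by at most `c` in each coordinate is, once centred, sub-Gaussian with
variance proxy `n * (c / 2) ^ 2`. By induction on `n`: conditionally on the first point the
induction hypothesis applies, and the conditional mean `g` of `f` has range in an interval of
length `c`, so that Hoeffding's lemma applies to it. -/
lemma mcdiarmid_hasSubgaussianMGF {Ω : Type*} [MeasurableSpace Ω] (μ : Measure Ω)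
    [IsProbabilityMeasure μ] (c C : ℝ) : ∀ (n : ℕ) (f : (Fin n → Ω) → ℝ), Measurable f →
    (∀ x, |f x| ≤ C) → (∀ x i y, |f (Function.update x i y) - f x| ≤ c) →
    HasSubgaussianMGF (fun x => f x - ∫ y, f y ∂Measure.pi fun _ : Fin n => μ)
      (n * (‖c‖₊ / 2) ^ 2) (Measure.pi fun _ : Fin n => μ) := by
  intro n
  induction n with
  | zero =>
    intro f hf hC hc
    have : (fun x => f x - ∫ y, f y ∂Measure.pi fun _ : Fin 0 => μ) = 0 := by
      funext x
      have : f = fun _ => f x := by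
        funext y; rw [Subsingleton.elim y x]
      rw [this]; simp
    rw [this]
    simp
  | succ n ih =>
    intro f hf hC hc
    set P := Measure.pi fun _ : Fin n => μ with hP
    set P' := Measure.pi fun _ : Fin (n + 1) => μ with hP'
    have hmp : MeasurePreserving (fun p : Ω × (Fin n → Ω) => (Fin.cons p.1 p.2 : Fin (n + 1) → Ω))
        (μ.prod P) P' := by
      have := (measurePreserving_piFinSuccAbove (fun _ : Fin (n + 1) => μ) 0).symm
      have he : (fun p : Ω × (Fin n → Ω) => (Fin.cons p.1 p.2 : Fin (n + 1) → Ω))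
          = (MeasurableEquiv.piFinSuccAbove (fun _ : Fin (n + 1) => Ω) 0).symm := by
        funext p
        simp [MeasurableEquiv.piFinSuccAbove_symm_apply, Fin.insertNthEquiv]
      rw [he]
      exact this
    have hmeas2 : Measurable (fun p : Ω × (Fin n → Ω) => f (Fin.cons p.1 p.2)) :=
      hf.comp hmp.measurable
    have hmeas1 : ∀ a, Measurable (fun x : Fin n → Ω => f (Fin.cons a x)) := fun a =>
      hmeas2.comp (measurable_prodMk_left)
    have hint : ∀ h : (Fin (n + 1) → Ω) → ℝ, Measurable h → Integrable h P' →
        ∫ x, h x ∂P' = ∫ a, ∫ x, h (Fin.cons a x) ∂P ∂μ := by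
      intro h hm hi
      rw [← hmp.map_eq, integral_map hmp.measurable.aemeasurable hm.aestronglyMeasurable,
        integral_prod]
      exact (hmp.integrable_comp hm.aestronglyMeasurable).2 hi
    set g : Ω → ℝ := fun a => ∫ x, f (Fin.cons a x) ∂P with hg
    have hgm : Measurable g := hmeas2.stronglyMeasurable.integral_prod_right'.measurable
    have hgC : ∀ a, |g a| ≤ C := fun a => by
      have := norm_integral_le_of_norm_le_const (μ := P) (f := fun x => f (Fin.cons a x))
        (C := C) (.of_forall fun x => hC _)
      simpa using this
    have hEg : ∫ x, f x ∂P' = ∫ a, g a ∂μ := hint f hf (integrable_of_abs_le hf hC)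
    have hgc : ∀ a b, g a ≤ g b + c := by
      intro a b
      have h1 : g a ≤ ∫ x, (f (Fin.cons b x) + c) ∂P := by
        refine integral_mono (integrable_of_abs_le (hmeas1 a) fun _ => hC _)
          ((integrable_of_abs_le (hmeas1 b) fun _ => hC _).add (integrable_const c)) fun x => ?_
        have := hc (Fin.cons b x) 0 a
        rw [Fin.update_cons_zero] at this
        linarith [le_abs_self (f (Fin.cons a x) - f (Fin.cons b x))]
      rwa [integral_add (integrable_of_abs_le (hmeas1 b) fun _ => hC _) (integrable_const c),
        integral_const, probReal_univ, one_smul] at h1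
    have hne : Nonempty Ω := by
      by_contra hcon
      rw [not_nonempty_iff] at hcon
      exact IsProbabilityMeasure.ne_zero μ (Measure.eq_zero_of_isEmpty μ)
    have hbb : BddBelow (Set.range g) := ⟨-C, by rintro _ ⟨a, rfl⟩; exact (abs_le.1 (hgC a)).1⟩
    have hH := hasSubgaussianMGF_of_mem_Icc (μ := μ) (X := g) (a := ⨅ a, g a)
      (b := (⨅ a, g a) + c) hgm.aemeasurable (.of_forall fun a => ⟨ciInf_le hbb a, by
        have : g a - c ≤ ⨅ b, g b := le_ciInf fun b => by linarith [hgc a b]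
        linarith⟩)
    rw [add_sub_cancel_left, ← hEg] at hH
    refine ⟨fun l => integrable_exp_of_abs_le P' l _ hf hC, fun l => ?_⟩
    have hstep : ∀ a, ∫ x, Real.exp (l * (f (Fin.cons a x) - g a)) ∂P
        ≤ Real.exp ((n * (‖c‖₊ / 2) ^ 2 : NNReal) * l ^ 2 / 2) := fun a => by
      refine (ih (fun x => f (Fin.cons a x)) (hmeas1 a) (fun _ => hC _) ?_).mgf_le l
      intro x i y
      have := hc (Fin.cons a x) i.succ y
      rwa [← Fin.cons_update] at this
    set E := ∫ x, f x ∂P' with hE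
    set K := Real.exp ((n * (‖c‖₊ / 2) ^ 2 : NNReal) * l ^ 2 / 2) with hK
    calc mgf (fun x => f x - E) P' l
        = ∫ a, ∫ x, Real.exp (l * (f (Fin.cons a x) - E)) ∂P ∂μ :=
          hint _ (by fun_prop) (integrable_exp_of_abs_le P' l _ hf hC)
      _ = ∫ a, Real.exp (l * (g a - E)) * ∫ x, Real.exp (l * (f (Fin.cons a x) - g a)) ∂P ∂μ := by
          congr 1; funext a
          rw [← integral_const_mul]
          congr 1; funext x
          rw [← Real.exp_add]; ring_nf
      _ ≤ ∫ a, Real.exp (l * (g a - E)) * K ∂μ := by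
          refine integral_mono_of_nonneg (.of_forall fun a => ?_)
            ((integrable_exp_of_abs_le μ l E hgm hgC).mul_const K) (.of_forall fun a => ?_)
          · exact mul_nonneg (Real.exp_pos _).le (integral_nonneg fun x => (Real.exp_pos _).le)
          · exact mul_le_mul_of_nonneg_left (hstep a) (Real.exp_pos _).le
      _ = mgf (fun a => g a - E) μ l * K := integral_mul_const _ _
      _ ≤ Real.exp (((‖c‖₊ / 2) ^ 2 : NNReal) * l ^ 2 / 2) * K := by
          gcongr
          exact hH.mgf_le l
      _ = _ := by
          rw [hK, ← Real.exp_add]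
          congr 1
          push_cast
          ring

/-! ### Symmetrization -/

/-- Swapping the two members of some of the i.i.d. pairs does not change an expectation. -/
lemma integral_pairs_eq_signed {Ω : Type*} [MeasurableSpace Ω] (μ : Measure Ω)
    [IsProbabilityMeasure μ] {n : ℕ} (F : (Fin n → Ω × Ω) → ℝ) (hF : Measurable F)
    (σ : Fin n → Bool) :
    ∫ w, F (fun j => if σ j then w j else (w j).swap) ∂(Measure.pi fun _ => μ.prod μ)
      = ∫ w, F w ∂(Measure.pi fun _ : Fin n => μ.prod μ) := by
  have hmp : MeasurePreserving (fun (w : Fin n → Ω × Ω) j => if σ j then w j else (w j).swap)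
      (Measure.pi fun _ => μ.prod μ) (Measure.pi fun _ => μ.prod μ) := by
    refine measurePreserving_pi (fun _ => μ.prod μ) (fun _ => μ.prod μ)
      (f := fun j p => if σ j then p else p.swap) fun j => ?_
    cases σ j
    · simpa using! Measure.measurePreserving_swap
    · simpa using! MeasurePreserving.id _
  conv_rhs => rw [← hmp.map_eq]
  rw [integral_map hmp.measurable.aemeasurable hF.aestronglyMeasurable]

/-- The uniform deviation `supᵢ |(1/m) Σⱼ fᵢ(xⱼ) - ∫ fᵢ dμ|` of the sample `x`. -/
noncomputable def dev {ι Ω : Type*} [MeasurableSpace Ω] (m : ℕ) (μ : Measure Ω) (f : ι → Ω → ℝ) :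
    (Fin m → Ω) → ℝ :=
  supAbs fun i x => (1 / m : ℝ) * ∑ j, f i (x j) - ∫ a, f i a ∂μ

/-- The supremum `supᵢ |(1/m) Σⱼ σⱼ fᵢ(xⱼ)|` for a fixed sign vector `σ`, with `true` standing
for `1` and `false` for `-1`. -/
noncomputable def radSup {ι Ω : Type*} {m : ℕ} (f : ι → Ω → ℝ) (σ : Fin m → Bool) :
    (Fin m → Ω) → ℝ :=
  supAbs fun i x => (1 / m : ℝ) * ∑ j, (if σ j then (1 : ℝ) else -1) * f i (x j)

lemma abs_mean_le {m : ℕ} (hm : 0 < m) (a : Fin m → ℝ) {B : ℝ} (ha : ∀ j, |a j| ≤ B) :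
    |(1 / m : ℝ) * ∑ j, a j| ≤ B := by
  have hm' : (0 : ℝ) < m := by exact_mod_cast hm
  rw [abs_mul, abs_of_pos (by positivity)]
  calc (1 / m : ℝ) * |∑ j, a j| ≤ (1 / m : ℝ) * ∑ j : Fin m, B := by
        gcongr
        exact (Finset.abs_sum_le_sum_abs _ _).trans (Finset.sum_le_sum fun j _ => ha j)
    _ = B := by simp; field_simp

lemma abs_integral_le {ι Ω : Type*} [MeasurableSpace Ω] (μ : Measure Ω) [IsProbabilityMeasure μ]
    {f : ι → Ω → ℝ} {B : ℝ} (hB : ∀ i a, |f i a| ≤ B) (i : ι) : |∫ a, f i a ∂μ| ≤ B := by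
  simpa using norm_integral_le_of_norm_le_const (μ := μ) (f := f i) (C := B)
    (.of_forall fun x => hB i x)

lemma abs_dev_term_le {ι Ω : Type*} [MeasurableSpace Ω] {m : ℕ} (hm : 0 < m) (μ : Measure Ω)
    [IsProbabilityMeasure μ] {f : ι → Ω → ℝ} {B : ℝ} (hB : ∀ i a, |f i a| ≤ B) (i : ι)
    (x : Fin m → Ω) : |(1 / m : ℝ) * ∑ j, f i (x j) - ∫ a, f i a ∂μ| ≤ 2 * B := by
  have h1 := abs_mean_le hm (fun j => f i (x j)) (fun j => hB i (x j))
  have h2 := abs_integral_le μ hB i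
  have := abs_sub ((1 / m : ℝ) * ∑ j, f i (x j)) (∫ a, f i a ∂μ)
  linarith

lemma abs_rad_term_le {ι Ω : Type*} {m : ℕ} (hm : 0 < m) {f : ι → Ω → ℝ} {B : ℝ}
    (hB : ∀ i a, |f i a| ≤ B) (σ : Fin m → Bool) (i : ι) (x : Fin m → Ω) :
    |(1 / m : ℝ) * ∑ j, (if σ j then (1 : ℝ) else -1) * f i (x j)| ≤ B :=
  abs_mean_le hm _ fun j => by
    rw [abs_mul]; split_ifs <;> simpa using hB i (x j)

lemma dev_measurable {ι Ω : Type*} [MeasurableSpace Ω] [Countable ι] {m : ℕ} (μ : Measure Ω)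
    {f : ι → Ω → ℝ} (hf : ∀ i, Measurable (f i)) : Measurable (dev m μ f) :=
  supAbs_measurable fun i => by have := hf i; fun_prop

lemma radSup_integrable {ι Ω : Type*} [MeasurableSpace Ω] [Countable ι] [Nonempty ι] {m : ℕ}
    (hm : 0 < m) (μ : Measure Ω) [IsProbabilityMeasure μ] {f : ι → Ω → ℝ}
    (hf : ∀ i, Measurable (f i)) {B : ℝ} (hB : ∀ i a, |f i a| ≤ B) (σ : Fin m → Bool) :
    Integrable (radSup f σ) (Measure.pi fun _ : Fin m => μ) :=
  supAbs_integrable (fun i => by have := hf i; fun_prop) (fun i x => abs_rad_term_le hm hB σ i x) _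

/-- Symmetrization for each fixed sign vector: after replacing `∫ fᵢ dμ` by the mean over a ghost
sample, swapping the pairs with `σⱼ = -1` introduces the signs for free, and the two halves have
the same law. -/
lemma dev_integral_le_radSup {ι Ω : Type*} [MeasurableSpace Ω] [Countable ι] [Nonempty ι] {m : ℕ}
    (hm : 0 < m) (μ : Measure Ω) [IsProbabilityMeasure μ] {f : ι → Ω → ℝ}
    (hf : ∀ i, Measurable (f i)) {B : ℝ} (hB : ∀ i a, |f i a| ≤ B)
    (σ : Fin m → Bool) :
    ∫ x, dev m μ f x ∂(Measure.pi fun _ : Fin m => μ)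
      ≤ 2 * ∫ x, radSup f σ x ∂(Measure.pi fun _ : Fin m => μ) := by
  set P := Measure.pi fun _ : Fin m => μ with hP
  let D : ι → (Fin m → Ω × Ω) → ℝ :=
    fun i w => (1 / m : ℝ) * ∑ j, (f i (w j).1 - f i (w j).2)
  let H : (Fin m → Ω × Ω) → ℝ := supAbs D
  have hDm : ∀ i, Measurable (D i) := fun i => by have := hf i; fun_prop
  have hDb : ∀ i w, |D i w| ≤ 2 * B := fun i w => abs_mean_le hm _ fun j => by
    have := abs_sub (f i (w j).1) (f i (w j).2)
    linarith [hB i (w j).1, hB i (w j).2]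
  have hHm : Measurable H := supAbs_measurable hDm
  have hHi : Integrable H (Measure.pi fun _ : Fin m => μ.prod μ) := supAbs_integrable hDm hDb _
  have hmp := (measurePreserving_arrowProdEquivProdArrow Ω Ω (Fin m)
    (fun _ => μ) (fun _ => μ)).symm
  let Φ : (Fin m → Ω) × (Fin m → Ω) → (Fin m → Ω × Ω) := fun p j => (p.1 j, p.2 j)
  have hΦ : MeasurePreserving Φ (P.prod P) (Measure.pi fun _ => μ.prod μ) := hmp
  have hHΦi : Integrable (fun p => H (Φ p)) (P.prod P) :=
    (hΦ.integrable_comp hHm.aestronglyMeasurable).2 hHi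
  have hHΦ : ∫ p, H (Φ p) ∂(P.prod P) = ∫ w, H w ∂(Measure.pi fun _ => μ.prod μ) := by
    rw [← hΦ.map_eq, integral_map hΦ.measurable.aemeasurable hHm.aestronglyMeasurable]
  have hfi : ∀ i, Integrable (f i) μ := fun i =>
    .of_bound (hf i).aestronglyMeasurable B (.of_forall (hB i))
  have hmean : ∀ i, Integrable (fun y : Fin m → Ω => (1 / m : ℝ) * ∑ j, f i (y j)) P := fun i =>
    integrable_of_abs_le (by have := hf i; fun_prop) fun y => abs_mean_le hm _ fun j => hB i _
  have hm' : (m : ℝ) ≠ 0 := by exact_mod_cast hm.ne'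
  have hEmean : ∀ i, ∫ y, (1 / m : ℝ) * ∑ j, f i (y j) ∂P = ∫ a, f i a ∂μ := by
    intro i
    have hcomp : ∀ j : Fin m, MeasurePreserving (fun y : Fin m → Ω => y j) P μ := fun j =>
      measurePreserving_eval (fun _ => μ) j
    rw [integral_const_mul, integral_finsetSum]
    · have : ∀ j : Fin m, ∫ y, f i (y j) ∂P = ∫ a, f i a ∂μ := fun j => by
        conv_rhs => rw [← (hcomp j).map_eq]
        rw [integral_map (hcomp j).measurable.aemeasurable (hf i).aestronglyMeasurable]
      simp [this]
      field_simp
    · exact fun j _ => ((hcomp j).integrable_comp (hf i).aestronglyMeasurable).2 (hfi i)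
  -- Each centred mean is an average over the ghost sample `y`, so Jensen applies.
  have hA : ∀ x, dev m μ f x ≤ ∫ y, H (Φ (x, y)) ∂P := by
    intro x
    have hHx : Integrable (fun y => H (Φ (x, y))) P :=
      .of_bound (hHm.comp (hΦ.measurable.comp measurable_prodMk_left)).aestronglyMeasurable (2 * B)
        (.of_forall fun y => abs_supAbs_le fun i => hDb i _)
    refine ciSup_le fun i => ?_
    have : (1 / m : ℝ) * ∑ j, f i (x j) - ∫ a, f i a ∂μ = ∫ y, D i (Φ (x, y)) ∂P := by
      rw [← hEmean i]
      have h0 : ∀ y, D i (Φ (x, y))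
          = (1 / m : ℝ) * ∑ j, f i (x j) - (1 / m : ℝ) * ∑ j, f i (y j) := fun y => by
        simp only [D, Φ, Finset.sum_sub_distrib, mul_sub]
      simp_rw [h0]
      rw [integral_sub (integrable_const _) (hmean i)]
      simp
    change |(1 / m : ℝ) * ∑ j, f i (x j) - ∫ a, f i a ∂μ| ≤ _
    rw [this]
    refine (abs_integral_le_integral_abs).trans ?_
    refine integral_mono_of_nonneg (.of_forall fun _ => abs_nonneg _) hHx (.of_forall fun y => ?_)
    exact le_supAbs (F := D) (fun i => hDb i _) i
  have hradm := radSup_integrable hm μ hf hB σ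
  have h1 : Integrable (fun p : (Fin m → Ω) × (Fin m → Ω) => radSup f σ p.1) (P.prod P) :=
    hradm.comp_fst P
  have h2 : Integrable (fun p : (Fin m → Ω) × (Fin m → Ω) => radSup f σ p.2) (P.prod P) :=
    hradm.comp_snd P
  let flip : (Fin m → Ω × Ω) → (Fin m → Ω × Ω) := fun w j => if σ j then w j else (w j).swap
  have hflip : Measurable flip := by
    refine measurable_pi_lambda _ fun j => ?_
    cases h : σ j
    · simpa [flip, h] using! measurable_swap.comp (measurable_pi_apply j)
    · simpa [flip, h] using! measurable_pi_apply j
  have hC : ∀ p, H (flip (Φ p)) ≤ radSup f σ p.1 + radSup f σ p.2 := by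
    intro p
    refine ciSup_le fun i => ?_
    have h0 : D i (flip (Φ p))
        = (1 / m : ℝ) * ∑ j, (if σ j then (1 : ℝ) else -1) * f i (p.1 j)
          - (1 / m : ℝ) * ∑ j, (if σ j then (1 : ℝ) else -1) * f i (p.2 j) := by
      simp only [D, ← mul_sub, ← Finset.sum_sub_distrib]
      congr 1
      refine Finset.sum_congr rfl fun j _ => ?_
      by_cases h : σ j <;> simp [flip, Φ, h]
    rw [h0]
    refine (abs_sub _ _).trans (add_le_add ?_ ?_)
    · exact le_supAbs (F := fun i (x : Fin m → Ω) =>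
        (1 / m : ℝ) * ∑ j, (if σ j then (1 : ℝ) else -1) * f i (x j))
        (fun i => abs_rad_term_le hm hB σ i p.1) i
    · exact le_supAbs (F := fun i (x : Fin m → Ω) =>
        (1 / m : ℝ) * ∑ j, (if σ j then (1 : ℝ) else -1) * f i (x j))
        (fun i => abs_rad_term_le hm hB σ i p.2) i
  calc ∫ x, dev m μ f x ∂P ≤ ∫ x, ∫ y, H (Φ (x, y)) ∂P ∂P :=
        integral_mono_of_nonneg (.of_forall fun x => supAbs_nonneg _ _) hHΦi.integral_prod_left
          (.of_forall hA)
    _ = ∫ w, H w ∂(Measure.pi fun _ => μ.prod μ) := by rw [← hHΦ, integral_prod _ hHΦi]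
    _ = ∫ w, H (flip w) ∂(Measure.pi fun _ => μ.prod μ) :=
        (integral_pairs_eq_signed μ H hHm σ).symm
    _ = ∫ p, H (flip (Φ p)) ∂(P.prod P) := by
        have hm2 : Measurable fun w => H (flip w) := hHm.comp hflip
        rw [← hΦ.map_eq, integral_map hΦ.measurable.aemeasurable hm2.aestronglyMeasurable]
    _ ≤ ∫ p, (radSup f σ p.1 + radSup f σ p.2) ∂(P.prod P) :=
        integral_mono_of_nonneg (.of_forall fun p => supAbs_nonneg _ _) (h1.add h2)
          (.of_forall hC)
    _ = 2 * ∫ x, radSup f σ x ∂P := by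
        rw [integral_add h1 h2, integral_fun_fst, integral_fun_snd]
        simp; ring

/-- The symmetrization inequality, from `dev_integral_le_radSup` by averaging over the signs. -/
lemma dev_integral_le_rademacher {Ω : Type*} [MeasurableSpace Ω] {m : ℕ} (hm : 0 < m)
    (μ : Measure Ω) [IsProbabilityMeasure μ] {𝓕 : Set (Ω → ℝ)} (h𝓕c : 𝓕.Countable)
    (hne : 𝓕.Nonempty) (hf : ∀ f ∈ 𝓕, Measurable f) {B : ℝ} (hB : ∀ f ∈ 𝓕, ∀ a, |f a| ≤ B) :
    ∫ x, dev m μ (fun f : 𝓕 => f.1) x ∂(Measure.pi fun _ : Fin m => μ)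
      ≤ 2 * rademacher m 𝓕 μ := by
  have : Countable 𝓕 := h𝓕c.to_subtype
  have : Nonempty 𝓕 := hne.to_subtype
  have hf' : ∀ f : 𝓕, Measurable f.1 := fun f => hf f.1 f.2
  have hB' : ∀ (f : 𝓕) a, |f.1 a| ≤ B := fun f => hB f.1 f.2
  let F : 𝓕 → (Fin m → Ω) × (Fin m → Bool) → ℝ := fun f p =>
    (1 / m : ℝ) * ∑ j, (if p.2 j then (1 : ℝ) else -1) * f.1 (p.1 j)
  have hFm : ∀ f, Measurable (F f) := fun f => by
    have h1 := hf' f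
    have h2 : Measurable fun b : Bool => if b then (1 : ℝ) else -1 := measurable_of_finite _
    have h3 : ∀ j : Fin m, Measurable fun p : (Fin m → Ω) × (Fin m → Bool) =>
        if p.2 j then (1 : ℝ) else -1 := fun j => h2.comp (by fun_prop)
    fun_prop
  have hFb : ∀ f p, |F f p| ≤ B := fun f p => abs_rad_term_le hm hB' p.2 f p.1
  have hrad : rademacher m 𝓕 μ = ∫ p, supAbs F p ∂((Measure.pi fun _ : Fin m => μ).prod
      (Measure.pi fun _ : Fin m => (PMF.uniformOfFintype Bool).toMeasure)) := by
    simp only [rademacher, sSup_image']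
    rfl
  have hi := supAbs_integrable hFm hFb ((Measure.pi fun _ : Fin m => μ).prod
      (Measure.pi fun _ : Fin m => (PMF.uniformOfFintype Bool).toMeasure))
  rw [hrad, integral_prod_symm _ hi, ← integral_const_mul]
  calc ∫ x, dev m μ (fun f : 𝓕 => f.1) x ∂(Measure.pi fun _ : Fin m => μ)
      = ∫ _σ : Fin m → Bool, ∫ x, dev m μ (fun f : 𝓕 => f.1) x ∂(Measure.pi fun _ : Fin m => μ)
          ∂(Measure.pi fun _ : Fin m => (PMF.uniformOfFintype Bool).toMeasure) := by simp
    _ ≤ _ := integral_mono (integrable_const _) (hi.integral_prod_right.const_mul 2)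
        fun σ => dev_integral_le_radSup hm μ hf' hB' σ

/-! ### Concentration of the uniform deviation -/

/-- Replacing one sample point changes the uniform deviation by at most `2B/m`. With
`ε = 2B√(t/(2m))`, the sub-Gaussian tail `exp(-ε²m/(2B²))` is exactly `exp(-t)`. Positivity of `B`
matters: for `B = 0` the event is everything. -/
lemma dev_tail {ι Ω : Type*} [MeasurableSpace Ω] [Countable ι] [Nonempty ι] {m : ℕ}
    (hm : 0 < m) (μ : Measure Ω) [IsProbabilityMeasure μ] {f : ι → Ω → ℝ}
    (hf : ∀ i, Measurable (f i)) {B : ℝ} (hB0 : 0 < B) (hB : ∀ i a, |f i a| ≤ B)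
    {t : ℝ} (ht : 0 < t) :
    (Measure.pi fun _ : Fin m => μ).real {x | 2 * B * √(t / (2 * m)) ≤
      dev m μ f x - ∫ y, dev m μ f y ∂(Measure.pi fun _ : Fin m => μ)} ≤ Real.exp (-t) := by
  have hm' : (0 : ℝ) < m := by exact_mod_cast hm
  have hterm : ∀ (x : Fin m → Ω) (j : Fin m) (y : Ω) (i : ι),
      |((1 / m : ℝ) * ∑ k, f i (Function.update x j y k) - ∫ a, f i a ∂μ)
        - ((1 / m : ℝ) * ∑ k, f i (x k) - ∫ a, f i a ∂μ)| ≤ 2 * B / m := by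
    intro x j y i
    have h0 : ∑ k, f i (Function.update x j y k) - ∑ k, f i (x k) = f i y - f i (x j) := by
      rw [← Finset.sum_sub_distrib, Finset.sum_eq_single j]
      · simp
      · intro k _ hk; simp [Function.update_of_ne hk]
      · simp
    rw [sub_sub_sub_cancel_right, ← mul_sub, h0, abs_mul, abs_of_pos (by positivity),
      one_div_mul_eq_div]
    gcongr
    have := abs_sub (f i y) (f i (x j))
    linarith [hB i y, hB i (x j)]
  have hdiff : ∀ (x : Fin m → Ω) (j : Fin m) (y : Ω),
      |dev m μ f (Function.update x j y) - dev m μ f x| ≤ 2 * B / m := by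
    intro x j y
    rw [abs_sub_le_iff]
    constructor
    · rw [sub_le_iff_le_add']
      exact supAbs_le_add (fun i w => abs_dev_term_le hm μ hB i w) (hterm x j y)
    · rw [sub_le_iff_le_add']
      exact supAbs_le_add (fun i w => abs_dev_term_le hm μ hB i w) fun i => by
        rw [abs_sub_comm]; exact hterm x j y i
  have hsub := mcdiarmid_hasSubgaussianMGF μ (2 * B / m) (2 * B) m (dev m μ f)
    (dev_measurable μ hf) (fun x => abs_supAbs_le fun i => abs_dev_term_le hm μ hB i x) hdiff
  refine (hsub.measure_ge_le (by positivity)).trans_eq ?_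
  congr 1
  push_cast
  rw [Real.norm_of_nonneg (by positivity), mul_pow, Real.sq_sqrt (by positivity)]
  field_simp

/-! ### Transport from the target to the source -/

/-- Under the domain-shift assumption `(T₀ X, Y)` has law `P_S` when `(X, Y)` has law `P_T`, so
an almost sure property of `(T₀ X, Y)` under `P_T` holds almost surely under `P_S`. -/
lemma ae_source_of_ae_target {𝒳S 𝒳T : Type*} [MeasurableSpace 𝒳S] [MeasurableSpace 𝒳T]
    (P_S : Measure (𝒳S × ℝ)) [IsProbabilityMeasure P_S]
    (P_T : Measure (𝒳T × ℝ)) [IsProbabilityMeasure P_T]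
    (T₀ : 𝒳T → 𝒳S) (hT₀m : Measurable T₀)
    (hpush : (P_T.map Prod.fst).map T₀ = P_S.map Prod.fst)
    (hcond : ∀ᵐ x ∂(P_T.map Prod.fst), condDistrib Prod.snd Prod.fst P_T x
        = condDistrib Prod.snd Prod.fst P_S (T₀ x))
    {A : Set (𝒳S × ℝ)} (hA : MeasurableSet A) (h : ∀ᵐ p ∂P_T, (T₀ p.1, p.2) ∈ A) :
    ∀ᵐ p ∂P_S, p ∈ A := by
  have hS : (P_S.map Prod.fst) ⊗ₘ condDistrib Prod.snd Prod.fst P_S = P_S := by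
    rw [compProd_map_condDistrib (by fun_prop)]
    simp
  have hT : (P_T.map Prod.fst) ⊗ₘ condDistrib Prod.snd Prod.fst P_T = P_T := by
    rw [compProd_map_condDistrib (by fun_prop)]
    simp
  have : IsProbabilityMeasure (P_T.map Prod.fst) :=
    Measure.isProbabilityMeasure_map (by fun_prop)
  have : IsProbabilityMeasure (P_S.map Prod.fst) :=
    Measure.isProbabilityMeasure_map (by fun_prop)
  have hA' : MeasurableSet {p : 𝒳T × ℝ | (T₀ p.1, p.2) ∈ A} :=
    (show Measurable fun p : 𝒳T × ℝ => (T₀ p.1, p.2) by fun_prop) hA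
  rw [← hT, Measure.ae_compProd_iff hA'] at h
  have hm : MeasurableSet {x : 𝒳S | ∀ᵐ y ∂condDistrib Prod.snd Prod.fst P_S x, (x, y) ∈ A} :=
    Kernel.measurable_kernel_prodMk_left hA.compl (measurableSet_singleton 0)
  rw [← hS, Measure.ae_compProd_iff (p := (· ∈ A)) hA, ← hpush,
    ae_map_iff hT₀m.aemeasurable hm]
  filter_upwards [h, hcond] with x hx hc
  rwa [← hc]

/-! ### The risk bound -/

/-- Theorem 4 of the paper: under the domain-shift assumption (a
measure-transport map `T₀` aligning the covariate marginals and the conditional laws),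
with probability at least `1 − e^{−t}` over the source sample, every empirical-width
minimizer `f̂` over the empirically feasible functions satisfies
`E_T[f̂ ∘ T̂₀] ≤ Δ + 4R_m(𝓕) + L_𝓕·E_T‖T̂₀ − T₀‖ + 4B_𝓕√(t/(2m))`. -/
theorem stmt4 {𝒳T : Type*} [MeasurableSpace 𝒳T] {d' : ℕ}
    (P_S : Measure (EuclideanSpace ℝ (Fin d') × ℝ)) [IsProbabilityMeasure P_S]
    (P_T : Measure (𝒳T × ℝ)) [IsProbabilityMeasure P_T]
    (νS : Measure (EuclideanSpace ℝ (Fin d'))) [IsProbabilityMeasure νS]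
    (hνS : νS = P_S.map Prod.fst)
    (νT : Measure 𝒳T) [IsProbabilityMeasure νT] (hνT : νT = P_T.map Prod.fst)
    (T₀ : 𝒳T → EuclideanSpace ℝ (Fin d')) (hT₀m : Measurable T₀)
    (hpush : νT.map T₀ = νS)
    (hcond : ∀ᵐ x ∂νT, condDistrib Prod.snd Prod.fst P_T x
        = condDistrib Prod.snd Prod.fst P_S (T₀ x))
    (That : 𝒳T → EuclideanSpace ℝ (Fin d')) (hThatm : Measurable That)
    (hint : Integrable (fun x => ‖That x - T₀ x‖) νT)
    (𝓕 : Set (EuclideanSpace ℝ (Fin d') → ℝ)) (h𝓕c : 𝓕.Countable)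
    (h𝓕m : ∀ f ∈ 𝓕, Measurable f)
    (B𝓕 L𝓕 : ℝ) (h𝓕b : ∀ f ∈ 𝓕, ∀ u, |f u| ≤ B𝓕)
    (h𝓕L : ∀ f ∈ 𝓕, ∀ u v, |f u - f v| ≤ L𝓕 * ‖u - v‖)
    (hfeas_ne : ∃ f ∈ 𝓕, ∀ᵐ p ∂P_T, p.2 ^ 2 ≤ f (T₀ p.1))
    (Δ : ℝ)
    (hΔ : Δ = sInf {r : ℝ | ∃ f ∈ 𝓕,
        (∀ᵐ p ∂P_T, p.2 ^ 2 ≤ f (T₀ p.1)) ∧ r = ∫ x, f (T₀ x) ∂νT})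
    (m : ℕ) (hm : 0 < m) (t : ℝ) (ht : 0 < t) :
    1 - Real.exp (-t) ≤
      ((Measure.pi fun _ : Fin m => P_S)
        {s : Fin m → EuclideanSpace ℝ (Fin d') × ℝ |
          ∀ fhat ∈ 𝓕, (∀ i, ((s i).2) ^ 2 ≤ fhat ((s i).1)) →
            (∀ f ∈ 𝓕, (∀ i, ((s i).2) ^ 2 ≤ f ((s i).1)) →
              (1 / m : ℝ) * ∑ i, fhat ((s i).1) ≤ (1 / m : ℝ) * ∑ i, f ((s i).1)) →
            ∫ x, fhat (That x) ∂νT ≤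
              Δ + 4 * rademacher m 𝓕 νS
                + L𝓕 * (∫ x, ‖That x - T₀ x‖ ∂νT)
                + 4 * B𝓕 * Real.sqrt (t / (2 * m))}).toReal := by
  have hm' : (0 : ℝ) < m := by exact_mod_cast hm
  obtain ⟨f₀, hf₀, hf₀feas⟩ := hfeas_ne
  have hne : 𝓕.Nonempty := ⟨f₀, hf₀⟩
  have : Countable 𝓕 := h𝓕c.to_subtype
  have : Nonempty 𝓕 := hne.to_subtype
  have hf' : ∀ f : 𝓕, Measurable f.1 := fun f => h𝓕m f.1 f.2
  have hB' : ∀ (f : 𝓕) a, |f.1 a| ≤ B𝓕 := fun f => h𝓕b f.1 f.2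
  have hB0 : 0 ≤ B𝓕 := (abs_nonneg _).trans (h𝓕b f₀ hf₀ 0)
  set P := Measure.pi fun _ : Fin m => P_S with hP
  set Q := Measure.pi fun _ : Fin m => νS with hQ
  have hfst : MeasurePreserving (Prod.fst : EuclideanSpace ℝ (Fin d') × ℝ → _) P_S νS :=
    ⟨measurable_fst, hνS.symm⟩
  have hπ : MeasurePreserving (fun s : Fin m → EuclideanSpace ℝ (Fin d') × ℝ =>
      fun i => (s i).1) P Q :=
    measurePreserving_pi (fun _ => P_S) (fun _ => νS) fun _ => hfst
  set G := dev m νS (fun f : 𝓕 => f.1) with hG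
  set ε := 2 * B𝓕 * √(t / (2 * m)) with hε
  -- All functions feasible for the target are feasible on almost every source sample.
  have hfeas : ∀ᵐ s ∂P, ∀ f ∈ 𝓕, (∀ᵐ p ∂P_T, p.2 ^ 2 ≤ f (T₀ p.1)) →
      ∀ i, (s i).2 ^ 2 ≤ f (s i).1 := by
    refine (ae_ball_iff h𝓕c).2 fun f hf => ?_
    by_cases hfT : ∀ᵐ p ∂P_T, p.2 ^ 2 ≤ f (T₀ p.1)
    · have hfm := h𝓕m f hf
      have hA : MeasurableSet {p : EuclideanSpace ℝ (Fin d') × ℝ | p.2 ^ 2 ≤ f p.1} :=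
        measurableSet_le (by fun_prop) (by fun_prop)
      have hS : ∀ᵐ p ∂P_S, p.2 ^ 2 ≤ f p.1 :=
        ae_source_of_ae_target P_S P_T T₀ hT₀m (by rw [← hνT, hpush, hνS])
          (by rwa [← hνT]) hA hfT
      have : ∀ᵐ s ∂P, ∀ i, (s i).2 ^ 2 ≤ f (s i).1 := ae_all_iff.2 fun i =>
        (measurePreserving_eval (fun _ : Fin m => P_S) i).quasiMeasurePreserving.ae hS
      filter_upwards [this] with s hs _ using hs
    · exact .of_forall fun s h => absurd h hfT
  -- A uniform deviation bound and target feasibility imply the risk bound.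
  have hdet : ∀ s : Fin m → EuclideanSpace ℝ (Fin d') × ℝ,
      (∀ f ∈ 𝓕, (∀ᵐ p ∂P_T, p.2 ^ 2 ≤ f (T₀ p.1)) → ∀ i, (s i).2 ^ 2 ≤ f (s i).1) →
      G (fun i => (s i).1) ≤ 2 * rademacher m 𝓕 νS + ε →
      ∀ fhat ∈ 𝓕, (∀ i, ((s i).2) ^ 2 ≤ fhat ((s i).1)) →
            (∀ f ∈ 𝓕, (∀ i, ((s i).2) ^ 2 ≤ f ((s i).1)) →
              (1 / m : ℝ) * ∑ i, fhat ((s i).1) ≤ (1 / m : ℝ) * ∑ i, f ((s i).1)) →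
            ∫ x, fhat (That x) ∂νT ≤
              Δ + 4 * rademacher m 𝓕 νS
                + L𝓕 * (∫ x, ‖That x - T₀ x‖ ∂νT)
                + 4 * B𝓕 * Real.sqrt (t / (2 * m)) := by
    intro s hs hGs fhat hfhat _ hmin
    have hET : ∀ f ∈ 𝓕, ∫ x, f (T₀ x) ∂νT = ∫ u, f u ∂νS := fun f hf => by
      rw [← hpush, integral_map hT₀m.aemeasurable (h𝓕m f hf).aestronglyMeasurable]
    have hGf : ∀ f ∈ 𝓕, |(1 / m : ℝ) * ∑ i, f ((s i).1) - ∫ u, f u ∂νS|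
        ≤ 2 * rademacher m 𝓕 νS + ε := fun f hf => by
      refine le_trans ?_ hGs
      exact le_supAbs (F := fun (f : 𝓕) (x : Fin m → EuclideanSpace ℝ (Fin d')) =>
        (1 / m : ℝ) * ∑ j, f.1 (x j) - ∫ a, f.1 a ∂νS)
        (fun f => abs_dev_term_le hm νS hB' f fun i => (s i).1) ⟨f, hf⟩
    have hfi : ∀ g : 𝒳T → EuclideanSpace ℝ (Fin d'), Measurable g →
        Integrable (fun x => fhat (g x)) νT := fun g hg =>
      integrable_of_abs_le ((h𝓕m fhat hfhat).comp hg) fun x => h𝓕b fhat hfhat _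
    have hshift : ∫ x, fhat (That x) ∂νT
        ≤ ∫ u, fhat u ∂νS + L𝓕 * ∫ x, ‖That x - T₀ x‖ ∂νT := by
      rw [← hET fhat hfhat, ← integral_const_mul,
        ← integral_add (hfi T₀ hT₀m) (hint.const_mul L𝓕)]
      refine integral_mono (hfi That hThatm) ((hfi T₀ hT₀m).add (hint.const_mul L𝓕)) fun x => ?_
      have := (abs_le.1 (h𝓕L fhat hfhat (That x) (T₀ x))).2
      simp only
      linarith
    have hlow : ∫ u, fhat u ∂νS - 2 * (2 * rademacher m 𝓕 νS + ε) ≤ Δ := by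
      rw [hΔ]
      refine le_csInf ⟨_, f₀, hf₀, hf₀feas, rfl⟩ ?_
      rintro r ⟨f, hf, hfT, rfl⟩
      rw [hET f hf]
      have h1 := (abs_le.1 (hGf fhat hfhat)).1
      have h2 := (abs_le.1 (hGf f hf)).2
      have h3 := hmin f hf (hs f hf hfT)
      linarith
    linarith
  have hsym : ∫ x, G x ∂Q ≤ 2 * rademacher m 𝓕 νS :=
    dev_integral_le_rademacher hm νS h𝓕c hne h𝓕m h𝓕b
  have hGm : Measurable G := dev_measurable νS hf'
  -- For `B𝓕 = 0` the event in `dev_tail` is everything, but then `G` vanishes identically.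
  obtain ⟨bad, hbadm, hbadP, hbad⟩ : ∃ bad : Set (Fin m → EuclideanSpace ℝ (Fin d')),
      MeasurableSet bad ∧ Q.real bad ≤ Real.exp (-t) ∧
        ∀ x ∉ bad, G x ≤ 2 * rademacher m 𝓕 νS + ε := by
    rcases hB0.eq_or_lt with h0 | hpos
    · refine ⟨∅, .empty, by simpa using (Real.exp_pos _).le, fun x _ => ?_⟩
      have h1 : |G x| ≤ 2 * B𝓕 := abs_supAbs_le fun f => abs_dev_term_le hm νS hB' f x
      have h2 : 0 ≤ ∫ x, G x ∂Q := integral_nonneg fun x => supAbs_nonneg _ _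
      have h3 : ε = 0 := by rw [hε, ← h0]; ring
      linarith [le_abs_self (G x)]
    · refine ⟨{x | ε ≤ G x - ∫ y, G y ∂Q}, measurableSet_le (by fun_prop) (by fun_prop),
        dev_tail hm νS hf' hpos hB' ht, fun x hx => ?_⟩
      have : G x - ∫ y, G y ∂Q < ε := not_le.1 hx
      linarith
  set π : (Fin m → EuclideanSpace ℝ (Fin d') × ℝ) → (Fin m → EuclideanSpace ℝ (Fin d')) :=
    fun s i => (s i).1 with hπdef
  calc 1 - Real.exp (-t) ≤ 1 - Q.real bad := by linarith
    _ = P.real (π ⁻¹' badᶜ) := by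
        rw [measureReal_def, measureReal_def, hπ.measure_preimage hbadm.compl.nullMeasurableSet,
          ← measureReal_def, ← measureReal_def, probReal_compl_eq_one_sub hbadm]
    _ ≤ _ := by
        refine ENNReal.toReal_mono (measure_ne_top _ _) (measure_mono_ae ?_)
        filter_upwards [hfeas] with s hs hgood
        exact hdet s hs (hbad _ hgood)
end

section
/- Let a₁,…,a_n and b₁,…,b_n be positive real numbers such that the ratios aᵢ/bᵢ are pairwise distinct, and let α ∈ (0,1). Define λ̂ = inf{λ ≥ 0 : (1/n)·#{i : aᵢ ≥ λ·bᵢ} ≤ α}. Then λ̂ = a_j/b_j for some index j (in particular 0 < λ̂ < ∞), and α < (1/n)·#{i : aᵢ ≥ λ̂·bᵢ} ≤ α + 1/n. -/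
/-!
Write `r i = a i / b i` and `F lam = #{i | lam ≤ r i}`, a nonincreasing step function. Let `r j` be
the largest ratio with `F (r j) > α n`; one exists since `F = n` at the smallest ratio. By
maximality, any set of indices with ratios strictly above `r j` has at most `α n` elements, because
it lies in `{i | r k ≤ r i}` with `k` its element of smallest ratio. Hence the set whose infimum is
taken is exactly `(r j, ∞)`, and `λ̂ = r j`. Since the ratios are distinct, `F (r j)` exceeds
`#{i | r j < r i} ≤ α n` by one.
-/

open Finset

/-- There is a ratio `r j` at which the count exceeds `c` while every set of indices with strictly
larger ratios has at most `c` elements. -/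
lemma exists_critical {n : ℕ} (hn : 0 < n) (r : Fin n → ℝ) (c : ℝ) (h0 : 0 ≤ c) (hc : c < n) :
    ∃ j, c < ((univ.filter (fun i => r j ≤ r i)).card : ℝ) ∧
      ∀ G : Finset (Fin n), (∀ i ∈ G, r j < r i) → (G.card : ℝ) ≤ c := by
  have hne : (univ.filter
      (fun j => c < ((univ.filter (fun i => r j ≤ r i)).card : ℝ))).Nonempty := by
    obtain ⟨m, -, hm⟩ := exists_min_image univ r ⟨⟨0, hn⟩, mem_univ _⟩
    refine ⟨m, mem_filter.2 ⟨mem_univ _, ?_⟩⟩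
    rw [filter_true_of_mem hm]
    simpa using hc
  obtain ⟨j, hj, hmax⟩ := exists_max_image _ r hne
  refine ⟨j, (mem_filter.1 hj).2, fun G hG => ?_⟩
  rcases G.eq_empty_or_nonempty with rfl | hGne
  · simpa using h0
  · obtain ⟨k, hk, hmin⟩ := exists_min_image G r hGne
    by_contra! hlt
    refine (hG k hk).not_ge (hmax k (mem_filter.2 ⟨mem_univ _, hlt.trans_le ?_⟩))
    exact_mod_cast card_le_card fun i hi => mem_filter.2 ⟨mem_univ _, hmin i hi⟩

/-- the empirical shrink level `λ̂` equals one of the ratios `aⱼ/bⱼ`, is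
positive, and the empirical miscoverage at `λ̂` lies in `(α, α + 1/n]`. -/
theorem stmt11 {n : ℕ} (hn : 0 < n) (a b : Fin n → ℝ)
    (ha : ∀ i, 0 < a i) (hb : ∀ i, 0 < b i)
    (hdist : ∀ i j, a i / b i = a j / b j → i = j)
    (α : ℝ) (hα : α ∈ Set.Ioo (0 : ℝ) 1) :
    letI lamhat : ℝ := sInf {lam : ℝ | 0 ≤ lam ∧
      (((Finset.univ : Finset (Fin n)).filter (fun i => lam * b i ≤ a i)).card : ℝ) / n ≤ α}
    (∃ j, lamhat = a j / b j) ∧ 0 < lamhat ∧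
      α < (((Finset.univ : Finset (Fin n)).filter (fun i => lamhat * b i ≤ a i)).card : ℝ) / n ∧
      (((Finset.univ : Finset (Fin n)).filter (fun i => lamhat * b i ≤ a i)).card : ℝ) / n
        ≤ α + 1 / n := by
  have hn' : (0 : ℝ) < n := by exact_mod_cast hn
  obtain ⟨j, hj, hG⟩ := exists_critical hn (fun i => a i / b i) (α * n)
    (mul_nonneg hα.1.le hn'.le) (by nlinarith [hα.2])
  have hpos : 0 < a j / b j := div_pos (ha j) (hb j)
  have hF : ∀ lam : ℝ, (univ.filter (fun i => lam * b i ≤ a i)) =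
      univ.filter (fun i => lam ≤ a i / b i) := fun lam =>
    filter_congr fun i _ => (le_div_iff₀ (hb i)).symm
  have hS : {lam : ℝ | 0 ≤ lam ∧
      (((Finset.univ : Finset (Fin n)).filter (fun i => lam * b i ≤ a i)).card : ℝ) / n ≤ α} =
      Set.Ioi (a j / b j) := by
    ext lam
    simp only [Set.mem_setOf_eq, Set.mem_Ioi, hF, div_le_iff₀ hn']
    constructor
    · rintro ⟨-, h⟩
      by_contra! hle
      refine (hj.trans_le ?_).not_ge h
      exact_mod_cast card_le_card fun i hi =>
        mem_filter.2 ⟨mem_univ _, hle.trans (mem_filter.1 hi).2⟩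
    · intro h
      exact ⟨(hpos.trans h).le, hG _ fun i hi => h.trans_le (mem_filter.1 hi).2⟩
  rw [hS, csInf_Ioi, hF]
  refine ⟨⟨j, rfl⟩, hpos, (lt_div_iff₀ hn').2 hj, ?_⟩
  have hsub : univ.filter (fun i => a j / b j ≤ a i / b i) ⊆
      insert j (univ.filter (fun i => a j / b j < a i / b i)) := by
    intro i hi
    rcases (mem_filter.1 hi).2.eq_or_lt with h | h
    · exact mem_insert.2 (Or.inl (hdist _ _ h).symm)
    · exact mem_insert_of_mem (mem_filter.2 ⟨mem_univ _, h⟩)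
  have h1 : ((univ.filter (fun i => a j / b j ≤ a i / b i)).card : ℝ) ≤
      (univ.filter (fun i => a j / b j < a i / b i)).card + 1 := by
    exact_mod_cast (card_le_card hsub).trans (card_insert_le _ _)
  have h2 := hG (univ.filter (fun i => a j / b j < a i / b i)) fun i hi => (mem_filter.1 hi).2
  rw [div_le_iff₀ hn', add_mul, one_div_mul_cancel hn'.ne']
  linarith
end
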